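/- There exists a closed infinite-dimensional linear subspace M of H(ℂ) such that every nonzero f ∈ M is a hypercyclic vector simultaneously for every operator λD with λ ∈ ℂ∖{0} and for every operator μT_a with a, μ ∈ ℂ∖{0}. In other words, the family {λD}_{λ∈ℂ∖{0}} ∪ {μT_a}_{a,μ∈ℂ∖{0}} possesses a common hypercyclic subspace. -/

import Mathlib

/-!
The space `M` is built by successive corrections of polynomials `P 0, P 1, …`. At stage `k` the
`k`-th polynomial receives a new term `z ^ M k`, and all further corrections vanish to higher
order at the origin and are small on large discs. In the limit one gets entire functions
`f 0, f 1, …` such that the Taylor coefficient of `f i` at the index `M j` is `1` if `i = j` and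
`0` otherwise. The space consists of all entire functions `f` whose Taylor series is the formal
sum `∑ᵢ cᵢ fᵢ`, with `cᵢ` the coefficient of `f` at the index `M i` (`IsTower.limSpace`). It is
closed because these conditions are linear relations between finitely many Taylor coefficients,
which are continuous, and it is infinite-dimensional because it contains the linearly independent
functions `f i`.

The corrections are chosen so as to satisfy a list of conditions. A condition consists of a small
set `U` of operators `l D` or `μ T_a`, an index `i₀`, a target polynomial `G` and an accuracy; it
asks that for each operator in `U` some iterate maps `P i₀` close to `G` and the other `P i`,
`i ≤ k`, close to `0`. By second countability, countably many conditions are enough, and each of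
them is treated at infinitely many stages (`exists_enumeration`). For `f` in the space with
`c i₀ ≠ 0`, the iterate then maps `∑ i ≤ k, cᵢ Pᵢ` close to `c i₀ • G`, and these multiples
approximate every entire function. The remainder `f - ∑ i ≤ k, cᵢ Pᵢ` does no harm. For
translations, later corrections are kept small on the discs used before, relative to the
multipliers `|μ| ^ n` used there (`IsTower.approx_T`). For differentiation, the remainder has
order `M (k + 1)` at the origin, which is chosen so large that `2 ^ M (k + 1)` dominates `N ! W`,
where `N` bounds the number of iterates and `W` the multipliers; Cauchy's estimates conclude
(`IsTower.approx_D`).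

It remains to see that a single correction can serve an open set of operators.

* For translations (`trans_patch`), Runge's theorem `runge_discs` provides polynomials which are
  close to `w * G (z - c)` on finitely many disjoint discs with centres `c`. One needs centres and
  weights `(c, w)` such that every `(a, μ)` near `(a₀, μ₀)` has an `n` with `n a ≈ c` and
  `μ ^ n * w ≈ 1` (`trans_covering`). The weight `exp (-b X)` at distance about `X` is good for
  all growth rates in an interval of length of order `1 / X`. The divergence of the harmonic
  series makes it possible to cover a whole interval of growth rates by centres at distances in an
  arithmetic progression (`harmonic_grid`), with room for shifting the centres sideways, which
  takes the argument of `a` into account. A finite net of the remaining bounded errors in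
  `n a - c` and `μ ^ n * w` makes them small.
* For differentiation (`deriv_patch`), the correction is a sum of `n`-fold antiderivatives of `G`
  with weights, the orders `n` running through an arithmetic progression of large step. By the
  same divergence, all `l` near `l₀` have an `n` for which `l ^ n` times the weight is close to
  `1` (`deriv_covering`); the factorials make the terms of higher order negligible.
-/

open Filter Metric Set

noncomputable def pnorm (j : ℝ) (f : ℂ → ℂ) : ℝ :=
  sSup ((fun z => ‖f z‖) '' Metric.closedBall (0 : ℂ) j)

/-- Convergence in `H(ℂ)`, i.e. uniform convergence on every compact subset of `ℂ`. -/
def TendstoH (F : ℕ → ℂ → ℂ) (f : ℂ → ℂ) : Prop :=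
  ∀ j : ℕ, 1 ≤ j → Filter.Tendsto (fun k => pnorm j (F k - f)) Filter.atTop (nhds 0)

/-- A set of entire functions is dense in `H(ℂ)`. -/
def DenseH (S : Set (ℂ → ℂ)) : Prop :=
  ∀ f : ℂ → ℂ, Differentiable ℂ f → ∀ j : ℕ, 1 ≤ j → ∀ ε : ℝ, 0 < ε →
    ∃ g ∈ S, pnorm j (g - f) < ε

/-- A set of entire functions is (sequentially) closed in `H(ℂ)`. -/
def ClosedH (M : Set (ℂ → ℂ)) : Prop :=
  ∀ (F : ℕ → ℂ → ℂ) (f : ℂ → ℂ), (∀ k, F k ∈ M) → Differentiable ℂ f →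
    TendstoH F f → f ∈ M

/-- The operator `μ D`, `f ↦ μ f'`. -/
noncomputable def derivOp (μ : ℂ) : (ℂ → ℂ) → ℂ → ℂ := fun f z => μ * deriv f z

/-- The operator `μ T_a`, `f ↦ μ f(· + a)`. -/
def transOp (μ a : ℂ) : (ℂ → ℂ) → ℂ → ℂ := fun f z => μ * f (z + a)

/-- The translation operator `T_a`, `f ↦ f(· + a)`. -/
def translOp (a : ℂ) : (ℂ → ℂ) → ℂ → ℂ := fun f z => f (z + a)

/-- `f` has dense orbit under `S` in `H(ℂ)`. -/
def HypercyclicFor (S : (ℂ → ℂ) → ℂ → ℂ) (f : ℂ → ℂ) : Prop :=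
  ∀ g : ℂ → ℂ, Differentiable ℂ g → ∀ j : ℕ, 1 ≤ j → ∀ ε : ℝ, 0 < ε →
    ∃ n : ℕ, pnorm j (S^[n] f - g) < ε

/-- `M` is a closed infinite-dimensional subspace of `H(ℂ)`. -/
def IsClosedInfDimSubspaceH (M : Submodule ℂ (ℂ → ℂ)) : Prop :=
  (∀ f ∈ M, Differentiable ℂ f) ∧ ClosedH (M : Set (ℂ → ℂ)) ∧ ¬ FiniteDimensional ℂ M

/-- `a` does not belong to the arc `{e^{iα} : α ∈ (-θ, θ)}` of the unit circle. -/
def OutsideArc (θ : ℝ) (a : ℂ) : Prop :=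
  ∀ α : ℝ, -θ < α → α < θ → a ≠ Complex.exp (α * Complex.I)

/-- A sequence `(n_k)_{k ≥ 1}` of positive integers is `φ`-increasing. -/
def PhiIncreasing (φ : ℕ → ℕ) (n : ℕ → ℕ) : Prop :=
  (∀ k, 1 ≤ k → 1 ≤ n k) ∧ ∀ k, 1 ≤ k → n k + φ (n k) < n (k + 1)

/-- `q` is a continuous seminorm on `H(ℂ)`. -/
def IsContinuousSeminormH (q : (ℂ → ℂ) → ℝ) : Prop :=
  (∀ f g : ℂ → ℂ, Differentiable ℂ f → Differentiable ℂ g → q (f + g) ≤ q f + q g) ∧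
  (∀ (c : ℂ) (f : ℂ → ℂ), Differentiable ℂ f → q (c • f) = ‖c‖ * q f) ∧
  (∃ (C : ℝ) (i : ℕ), 0 < C ∧ 1 ≤ i ∧ ∀ f : ℂ → ℂ, Differentiable ℂ f → q f ≤ C * pnorm i f)

/-- `q` is a continuous norm on `H(ℂ)`. -/
def IsContinuousNormH (q : (ℂ → ℂ) → ℝ) : Prop :=
  IsContinuousSeminormH q ∧ ∀ f : ℂ → ℂ, Differentiable ℂ f → q f = 0 → f = 0

/-! ### Runge's theorem for disjoint discs -/

theorem annulus_isPreconnected (c : ℂ) (r R : ℝ) (hr : 0 ≤ r) :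
    IsPreconnected {z : ℂ | r < ‖z - c‖ ∧ ‖z - c‖ < R} := by
  have h : {z : ℂ | r < ‖z - c‖ ∧ ‖z - c‖ < R} =
      (fun p : ℝ × ℝ => c + p.1 * Complex.exp (p.2 * Complex.I)) '' (Ioo r R ×ˢ univ) := by
    ext z
    constructor
    · rintro ⟨h1, h2⟩
      refine ⟨(‖z - c‖, Complex.arg (z - c)), ⟨⟨h1, h2⟩, mem_univ _⟩, ?_⟩
      simp [Complex.norm_mul_exp_arg_mul_I]
    · rintro ⟨⟨t, θ⟩, ⟨⟨h1, h2⟩, -⟩, rfl⟩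
      have ht : 0 < t := lt_of_le_of_lt hr h1
      simp only [mem_ofPred_eq, add_sub_cancel_left, norm_mul, Complex.norm_real,
        Complex.norm_exp_ofReal_mul_I, mul_one, Real.norm_eq_abs, abs_of_pos ht]
      exact ⟨h1, h2⟩
  rw [h]
  refine IsPreconnected.image ?_ _ (by fun_prop)
  exact isPreconnected_Ioo.prod isPreconnected_univ

/-- A compact set whose frontier lies in a finite disjoint union of closed discs is contained in
this union: the complement of the union has no bounded component. At a rightmost point of the
remaining part of `σ`, either moving to the right stays in `σ`, or the point lies on one of the
discs, and a connected annulus around this disc would be contained in `σ`. -/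
theorem eq_discs_of_frontier_subset {ι : Type*} (s : Finset ι) (c : ι → ℂ) (r R : ι → ℝ)
    (hr : ∀ i ∈ s, 0 ≤ r i) (hR : ∀ i ∈ s, r i < R i)
    (hdisj : ∀ i ∈ s, ∀ j ∈ s, i ≠ j → R i + r j ≤ dist (c i) (c j))
    (σ : Set ℂ) (hσ : IsCompact σ)
    (hfr : frontier σ ⊆ ⋃ i ∈ s, closedBall (c i) (r i)) :
    σ ⊆ ⋃ i ∈ s, closedBall (c i) (r i) := by
  set K := ⋃ i ∈ s, closedBall (c i) (r i) with hK
  have hKc : IsClosed K := s.finite_toSet.isClosed_biUnion (fun i _ => isClosed_closedBall)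
  by_contra hne
  obtain ⟨x, hx, hxK⟩ := not_subset.1 hne
  have hBc : IsCompact (closure (σ \ K)) :=
    (hσ.of_isClosed_subset isClosed_closure
      ((closure_mono sdiff_subset).trans hσ.isClosed.closure_subset))
  have hin : σ \ K ⊆ interior σ := by
    rintro y ⟨hy, hyK⟩
    by_contra hyi
    exact hyK (hfr ⟨subset_closure hy, hyi⟩)
  -- a rightmost point of the closure of the part of `σ` outside the discs
  obtain ⟨b, hb, hbmax⟩ := hBc.exists_isMaxOn ⟨x, subset_closure ⟨hx, hxK⟩⟩
    (f := Complex.re) Complex.continuous_re.continuousOn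
  have hbσ : b ∈ σ := by
    have := closure_mono (sdiff_subset (s := σ) (t := K)) hb
    rwa [hσ.isClosed.closure_eq] at this
  by_cases hbK : b ∈ K
  · obtain ⟨i, hi, hbi⟩ := mem_iUnion₂.1 hbK
    set A := {z : ℂ | r i < ‖z - c i‖ ∧ ‖z - c i‖ < R i} with hA
    have hAK : ∀ z ∈ A, z ∉ K := by
      rintro z ⟨h1, h2⟩ hz
      obtain ⟨j, hj, hzj⟩ := mem_iUnion₂.1 hz
      rw [mem_closedBall, dist_eq_norm] at hzj
      by_cases hij : i = j
      · subst hij; linarith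
      · have := hdisj i hi j hj hij
        have h3 := dist_triangle_left (c i) (c j) z
        rw [dist_eq_norm z, dist_eq_norm z] at h3
        linarith
    have hbb : ball (c i) (R i) ∈ nhds b := by
      apply isOpen_ball.mem_nhds
      rw [mem_closedBall] at hbi
      rw [mem_ball]
      linarith [hR i hi]
    obtain ⟨y, hy1, hy2⟩ := mem_closure_iff_nhds.1 hb _ hbb
    have hyA : y ∈ A := by
      rw [mem_ball, dist_eq_norm] at hy1
      refine ⟨?_, hy1⟩
      by_contra hle
      apply hy2.2
      refine mem_iUnion₂.2 ⟨i, hi, ?_⟩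
      rw [mem_closedBall, dist_eq_norm]
      linarith
    have hAσ : A ⊆ σ := by
      by_contra hnot
      obtain ⟨w, hwA, hw⟩ := not_subset.1 hnot
      obtain ⟨u, -, hu1, hu2⟩ := annulus_isPreconnected (c i) (r i) (R i) (hr i hi)
        (interior σ) σᶜ isOpen_interior hσ.isClosed.isOpen_compl
        (fun z hz => or_iff_not_imp_left.2 fun hzi hzσ =>
          hAK z hz (hfr ⟨subset_closure hzσ, hzi⟩))
        ⟨y, hyA, hin hy2⟩ ⟨w, hwA, hw⟩
      exact hu2 (interior_subset hu1)
    set m : ℂ := c i + (((r i + R i) / 2 : ℝ) : ℂ) with hm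
    have hmA : m ∈ A := by
      have h0 := hr i hi
      have h1 := hR i hi
      have : ‖m - c i‖ = (r i + R i) / 2 := by
        rw [hm, add_sub_cancel_left, Complex.norm_real, Real.norm_eq_abs,
          abs_of_nonneg (by linarith)]
      refine ⟨?_, ?_⟩ <;> rw [this] <;> linarith
    have h1 := hbmax (subset_closure ⟨hAσ hmA, hAK m hmA⟩)
    simp only [mem_ofPred_eq] at h1
    have h2 : m.re = (c i).re + (r i + R i) / 2 := by simp [hm]
    have h3 : b.re - (c i).re ≤ r i := by
      rw [mem_closedBall, dist_eq_norm] at hbi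
      calc b.re - (c i).re = (b - c i).re := by simp
        _ ≤ ‖b - c i‖ := Complex.re_le_norm _
        _ ≤ r i := hbi
    have := hR i hi
    rw [h2] at h1
    linarith
  · have hbi : interior σ ∩ Kᶜ ∈ nhds b :=
      (isOpen_interior.inter hKc.isOpen_compl).mem_nhds ⟨hin ⟨hbσ, hbK⟩, hbK⟩
    obtain ⟨ε, hε, hball⟩ := Metric.mem_nhds_iff.1 hbi
    have hm : b + ((ε / 2 : ℝ) : ℂ) ∈ ball b ε := by
      rw [mem_ball, dist_eq_norm, add_sub_cancel_left, Complex.norm_real, Real.norm_eq_abs,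
        abs_of_pos (by linarith)]
      linarith
    have h1 := hbmax (subset_closure ⟨interior_subset (hball hm).1, (hball hm).2⟩)
    simp at h1
    linarith

/-- Runge's theorem for a finite union `K` of pairwise disjoint closed discs. In the closure `S` of
the polynomials in `C(K, ℂ)` the spectrum of the coordinate function `x` has its frontier in `K`,
hence is contained in `K`. So `ζ ↦ (ζ - x)⁻¹` is an `S`-valued function off `K`, and the Cauchy
integrals which reproduce the functions `g i` take their values in `S`. -/
theorem runge_discs {ι : Type*} (s : Finset ι) (c : ι → ℂ) (r R : ι → ℝ)
    (hr : ∀ i ∈ s, 0 ≤ r i) (hR : ∀ i ∈ s, r i < R i)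
    (hdisj : ∀ i ∈ s, ∀ j ∈ s, i ≠ j → R i + r j ≤ dist (c i) (c j))
    (g : ι → ℂ → ℂ) (hg : ∀ i ∈ s, DifferentiableOn ℂ (g i) (ball (c i) (R i)))
    (η : ℝ) (hη : 0 < η) :
    ∃ q : Polynomial ℂ, ∀ i ∈ s, ∀ z ∈ closedBall (c i) (r i), ‖q.eval z - g i z‖ ≤ η := by
  set K := ⋃ i ∈ s, closedBall (c i) (r i) with hK
  have hKc : IsCompact K := s.finite_toSet.isCompact_biUnion (fun i _ => isCompact_closedBall _ _)
  have : CompactSpace K := isCompact_iff_compactSpace.1 hKc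
  set S := (polynomialFunctions K).topologicalClosure with hS
  have hSc : IsClosed (S : Set C(K, ℂ)) := Subalgebra.isClosed_topologicalClosure _
  have : CompleteSpace S := hSc.completeSpace_coe
  set x : S := ⟨Polynomial.toContinuousMapOn Polynomial.X K,
    Subalgebra.le_topologicalClosure _ ⟨Polynomial.X, by simp, rfl⟩⟩ with hx
  have hspec : spectrum ℂ (x : C(K, ℂ)) = K := by
    rw [ContinuousMap.spectrum_eq_range]
    ext z
    simp [hx]
  have hspecS : spectrum ℂ x ⊆ K := by
    apply eq_discs_of_frontier_subset s c r R hr hR hdisj _ (spectrum.isCompact x)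
    exact (Subalgebra.frontier_spectrum S x).trans hspec.subset
  have hev : ∀ ζ ∉ K, ∀ z : K, ((resolvent x ζ : S) : C(K, ℂ)) z = (ζ - z)⁻¹ := by
    intro ζ hζ z
    have hu : IsUnit (algebraMap ℂ S ζ - x) := by
      have : ζ ∉ spectrum ℂ x := fun h => hζ (hspecS h)
      rwa [spectrum.notMem_iff] at this
    have h1 : resolvent x ζ * (algebraMap ℂ S ζ - x) = 1 := Ring.inverse_mul_cancel _ hu
    have h2 := congrArg (fun f : S => (f : C(K, ℂ)) z) h1
    simp [hx] at h2
    exact eq_inv_of_mul_eq_one_left h2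
  have hcont : ContinuousOn (resolvent x) Kᶜ := by
    intro ζ hζ
    have : ζ ∈ resolventSet ℂ x := by
      by_contra h
      exact hζ (hspecS h)
    exact (spectrum.hasDerivAt_resolvent_const_left this).continuousAt.continuousWithinAt
  set ρ : ι → ℝ := fun i => (r i + R i) / 2 with hρ
  have hsph : ∀ i ∈ s, sphere (c i) (ρ i) ⊆ Kᶜ := by
    intro i hi z hz hzK
    obtain ⟨j, hj, hzj⟩ := mem_iUnion₂.1 hzK
    rw [mem_closedBall] at hzj
    rw [mem_sphere] at hz
    have h1 := hR i hi
    simp only [hρ] at hz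
    by_cases hij : i = j
    · subst hij; linarith
    · have := hdisj i hi j hj hij
      have h3 := dist_triangle_left (c i) (c j) z
      linarith
  set F : ι → S := fun i => (2 * Real.pi * Complex.I : ℂ)⁻¹ •
    ∮ ζ in C(c i, ρ i), g i ζ • resolvent x ζ with hF
  have hFev : ∀ i ∈ s, ∀ z : K, ((F i : S) : C(K, ℂ)) z =
      (2 * Real.pi * Complex.I : ℂ)⁻¹ • ∮ ζ in C(c i, ρ i), (ζ - z)⁻¹ • g i ζ := by
    intro i hi z
    have hρ0 : 0 ≤ ρ i := by have := hr i hi; have := hR i hi; simp only [hρ]; linarith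
    set L : S →L[ℂ] ℂ := (ContinuousMap.evalCLM ℂ z).comp S.toSubmodule.subtypeL with hL
    have hLv : ∀ f : S, L f = (f : C(K, ℂ)) z := fun f => rfl
    have hci : CircleIntegrable (fun ζ => g i ζ • resolvent x ζ) (c i) (ρ i) := by
      apply ContinuousOn.circleIntegrable hρ0
      apply ContinuousOn.fun_smul
      · apply (hg i hi).continuousOn.mono
        intro z hz
        rw [mem_sphere] at hz
        rw [mem_ball, hz]
        have := hR i hi
        simp only [hρ]; linarith
      · exact hcont.mono (hsph i hi)
    rw [← hLv, hF]
    simp only [map_smul]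
    congr 1
    rw [circleIntegral, ← ContinuousLinearMap.intervalIntegral_comp_comm _ hci.out, circleIntegral]
    apply intervalIntegral.integral_congr
    intro θ _
    simp only [map_smul]
    rw [hLv, hev _ (hsph i hi (circleMap_mem_sphere _ hρ0 _))]
    simp only [smul_eq_mul]
    ring
  have hdiag : ∀ i ∈ s, ∀ z : K, (z : ℂ) ∈ closedBall (c i) (r i) →
      ((F i : S) : C(K, ℂ)) z = g i z := by
    intro i hi z hz
    rw [hFev i hi z]
    have h1 := hR i hi
    have hd : DiffContOnCl ℂ (g i) (ball (c i) (ρ i)) := by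
      apply DifferentiableOn.diffContOnCl
      apply (hg i hi).mono
      refine closure_ball_subset_closedBall.trans (closedBall_subset_ball ?_)
      simp only [hρ]; linarith
    apply hd.two_pi_i_inv_smul_circleIntegral_sub_inv_smul
    rw [mem_closedBall] at hz
    rw [mem_ball]
    simp only [hρ]; linarith
  have hoff : ∀ i ∈ s, ∀ j ∈ s, i ≠ j → ∀ z : K, (z : ℂ) ∈ closedBall (c j) (r j) →
      ((F i : S) : C(K, ℂ)) z = 0 := by
    intro i hi j hj hij z hz
    rw [hFev i hi z]
    have h1 := hR i hi
    have h0 := hr i hi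
    have hout : ∀ ζ ∈ closedBall (c i) (ρ i), ζ - z ≠ 0 := by
      intro ζ hζ h
      have hh : ζ = z := sub_eq_zero.1 h
      rw [hh, mem_closedBall] at hζ
      rw [mem_closedBall] at hz
      have := hdisj i hi j hj hij
      have h3 := dist_triangle_left (c i) (c j) z
      simp only [hρ] at hζ
      linarith
    have hd : DiffContOnCl ℂ (fun ζ => (ζ - (z : ℂ))⁻¹ • g i ζ) (ball (c i) (ρ i)) := by
      apply DifferentiableOn.diffContOnCl
      have hcl : closure (ball (c i) (ρ i)) ⊆ closedBall (c i) (ρ i) :=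
        closure_ball_subset_closedBall
      apply DifferentiableOn.fun_smul
      · apply DifferentiableOn.inv (by fun_prop)
        intro ζ hζ
        exact hout ζ (hcl hζ)
      · apply (hg i hi).mono
        refine hcl.trans (closedBall_subset_ball ?_)
        simp only [hρ]; linarith
    rw [hd.circleIntegral_eq_zero (by simp only [hρ]; linarith), smul_zero]
  have hmem : ((∑ i ∈ s, F i : S) : C(K, ℂ)) ∈ closure (polynomialFunctions K : Set C(K, ℂ)) :=
    (∑ i ∈ s, F i).2
  obtain ⟨f, hf, hfd⟩ := Metric.mem_closure_iff.1 hmem η hη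
  rw [polynomialFunctions_coe] at hf
  obtain ⟨q, rfl⟩ := hf
  refine ⟨q, fun i hi z hz => ?_⟩
  have hzK : z ∈ K := mem_iUnion₂.2 ⟨i, hi, hz⟩
  have h1 : ((∑ i ∈ s, F i : S) : C(K, ℂ)) ⟨z, hzK⟩ = g i z := by
    rw [AddSubmonoidClass.coe_finsetSum, ContinuousMap.sum_apply, Finset.sum_eq_single i]
    · exact hdiag i hi ⟨z, hzK⟩ hz
    · intro j hj hji
      exact hoff j hj i hi hji ⟨z, hzK⟩ hz
    · exact fun h => absurd hi h
  have h2 := (ContinuousMap.dist_apply_le_dist (f := ((∑ i ∈ s, F i : S) : C(K, ℂ)))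
    (g := Polynomial.toContinuousMapOnAlgHom K q) ⟨z, hzK⟩).trans hfd.le
  rw [h1, dist_comm, dist_eq_norm] at h2
  simpa using h2

/-! ### Grids, nets and approximate covering for the multiples of differentiation -/

theorem norm_mul_sub_one_le {x y : ℂ} {δ ε : ℝ} (hδ : δ ≤ 1)
    (hx : ‖x - 1‖ ≤ δ) (hy : ‖y - 1‖ ≤ ε) : ‖x * y - 1‖ ≤ δ + 2 * ε := by
  have h : x * y - 1 = (x - 1) + x * (y - 1) := by ring
  have hx2 : ‖x‖ ≤ 2 := by
    calc ‖x‖ = ‖(x - 1) + 1‖ := by ring_nf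
      _ ≤ ‖x - 1‖ + ‖(1 : ℂ)‖ := norm_add_le _ _
      _ ≤ 2 := by rw [norm_one]; linarith
  rw [h]
  calc _ ≤ ‖x - 1‖ + ‖x‖ * ‖y - 1‖ := by rw [← norm_mul]; exact norm_add_le _ _
    _ ≤ δ + 2 * ε := by
      have := mul_le_mul hx2 hy (norm_nonneg _) (by norm_num)
      linarith

/-- A finite grid on `[b₀, T]` whose step at index `p` is at most `h / (x₀ + D (p + 1))`. It exists
because the harmonic series diverges. -/
theorem harmonic_grid (x₀ D h b₀ T : ℝ) (hx : 0 < x₀) (hD : 0 < D) (hh : 0 < h) :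
    ∃ (b : ℕ → ℝ) (N : ℕ), Monotone b ∧ b 0 = b₀ ∧ (∀ p < N, b p ≤ T) ∧
      ∀ t, b₀ ≤ t → t ≤ T → ∃ p < N, b p ≤ t ∧ t - b p ≤ h / (x₀ + D * (p + 1)) := by
  set b : ℕ → ℝ := fun p => b₀ + ∑ q ∈ Finset.range p, h / (x₀ + D * (q + 1)) with hb
  have hpos : ∀ q : ℕ, 0 < x₀ + D * ((q : ℝ) + 1) := fun q => by positivity
  have hsucc : ∀ p, b (p + 1) = b p + h / (x₀ + D * (p + 1)) := fun p => by
    simp only [hb, Finset.sum_range_succ]; ring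
  have hmono : Monotone b := monotone_nat_of_le_succ fun p => by
    rw [hsucc]; have := div_pos hh (hpos p); linarith
  have htend : Tendsto b atTop atTop := by
    apply tendsto_atTop_add_const_left
    have h1 := (Real.tendsto_sum_range_one_div_nat_succ_atTop).const_mul_atTop
      (show 0 < h / (x₀ + D) by positivity)
    refine tendsto_atTop_mono (fun p => ?_) h1
    rw [Finset.mul_sum]
    apply Finset.sum_le_sum
    intro q _
    rw [div_mul_div_comm, mul_one]
    apply div_le_div_of_nonneg_left hh.le (hpos q)
    nlinarith [mul_nonneg hx.le (Nat.cast_nonneg (α := ℝ) q)]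
  have hex : ∀ t, ∃ n, t < b n := fun t => (htend.eventually_gt_atTop t).exists
  classical
  refine ⟨b, Nat.find (hex T), hmono, by simp [hb], fun p hp => ?_, fun t ht0 htT => ?_⟩
  · exact not_lt.1 (Nat.find_min (hex T) hp)
  · have h0 : Nat.find (hex t) ≠ 0 := by
      intro h
      have := Nat.find_spec (hex t)
      rw [h] at this
      simp only [hb, Finset.range_zero, Finset.sum_empty, add_zero] at this
      linarith
    obtain ⟨p, hp⟩ := Nat.exists_eq_succ_of_ne_zero h0
    have h1 : b p ≤ t := not_lt.1 (Nat.find_min (hex t) (by omega))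
    have h2 := Nat.find_spec (hex t)
    rw [hp, Nat.succ_eq_add_one, hsucc] at h2
    refine ⟨p, ?_, h1, by linarith⟩
    by_contra hle
    have h3 := hmono (not_lt.1 hle)
    have := Nat.find_spec (hex T)
    linarith

/-- A finite net, up to ratio `δ`, in a compact set of pairs with nonzero second coordinate. -/
theorem exists_ratio_net (Y : Set (ℂ × ℂ)) (hY : IsCompact Y) (hY0 : ∀ y ∈ Y, y.2 ≠ 0) (δ : ℝ)
    (hδ : 0 < δ) :
    ∃ (L : ℕ) (v : ℕ → ℂ × ℂ), (∀ m < L, v m ∈ Y) ∧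
      ∀ y ∈ Y, ∃ m < L, ‖y.1 - (v m).1‖ ≤ δ ∧ ‖y.2 / (v m).2 - 1‖ ≤ δ := by
  obtain ⟨t, ht, hcov⟩ := hY.elim_nhds_subcover
    (fun v => {y : ℂ × ℂ | ‖y.1 - v.1‖ < δ ∧ (v.2 ≠ 0 → ‖y.2 / v.2 - 1‖ < δ)}) (fun v hv => by
      have hv0 := hY0 v hv
      apply IsOpen.mem_nhds
      · simp only [hv0, ne_eq, not_false_eq_true, forall_const, ofPred_and]
        apply IsOpen.inter
        · exact isOpen_lt (by fun_prop) continuous_const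
        · exact isOpen_lt (by fun_prop) continuous_const
      · simp [hv0, hδ])
  refine ⟨t.card, fun m => if h : m < t.card then (t.equivFin.symm ⟨m, h⟩ : ℂ × ℂ) else 0, ?_, ?_⟩
  · intro m hm
    simp only [hm, dif_pos]
    exact ht _ (t.equivFin.symm ⟨m, hm⟩).2
  · intro y hy
    obtain ⟨v, hv, hy1, hy2⟩ := mem_iUnion₂.1 (hcov hy)
    refine ⟨t.equivFin ⟨v, hv⟩, (t.equivFin ⟨v, hv⟩).2, ?_⟩
    simp only [Fin.is_lt, dif_pos, Fin.eta, Equiv.symm_apply_apply]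
    exact ⟨hy1.le, (hy2 (hY0 v (ht v hv))).le⟩

/-- Approximate covering of the multiples `λ`: all `λ` near `λ₀` satisfy `λ ^ n * κ ≈ 1` for one of
finitely many pairs `(n, κ)`, where the exponents `n` form an arithmetic progression with arbitrary
start and step and the weights `κ` grow in a controlled way along the progression. -/
theorem deriv_covering (l₀ : ℂ) (hl₀ : l₀ ≠ 0) (δ : ℝ) (hδ : 0 < δ) :
    ∃ A : ℝ, 1 ≤ A ∧ ∀ K : ℕ, 1 ≤ K → ∃ U ∈ nhds l₀, ∀ n₀ : ℕ, 1 ≤ n₀ →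
      ∃ (J : ℕ) (κ : ℕ → ℂ), (∀ j < J, ‖κ j‖ ≤ A ^ (n₀ + K * j)) ∧
        (∀ j < J, κ j ≠ 0) ∧
        (∀ j < J, ∀ l ≤ j, ‖κ j‖ ≤ A ^ (K * (j - l)) * ‖κ l‖) ∧
        ∀ l ∈ U, ∃ j < J, ‖l ^ (n₀ + K * j) * κ j - 1‖ ≤ δ := by
  set δ₁ := min δ 1 / 7 with hδ₁
  have hδ₁0 : 0 < δ₁ := by positivity
  have hδ₁1 : δ₁ ≤ 1 / 7 := by rw [hδ₁]; have := min_le_right δ 1; linarith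
  have hδ₁δ : 7 * δ₁ ≤ δ := by rw [hδ₁]; have := min_le_left δ 1; linarith
  set b₀ := Real.log ‖l₀‖ with hb₀
  set A := Real.exp (|b₀| + 1) with hA
  have hl₀n : 0 < ‖l₀‖ := norm_pos_iff.2 hl₀
  obtain ⟨L, v, hv, hnet⟩ := exists_ratio_net ({(0 : ℂ)} ×ˢ sphere 0 1)
    (isCompact_singleton.prod (isCompact_sphere _ _)) (by
      rintro ⟨y1, y2⟩ ⟨-, hy⟩ h
      simp only at h
      simp [h] at hy) δ₁ hδ₁0
  have hv1 : ∀ m < L, ‖(v m).2‖ = 1 := fun m hm => by simpa using (hv m hm).2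
  have hL : 0 < L := by
    obtain ⟨m, hm, -⟩ := hnet (0, 1) (by simp)
    omega
  refine ⟨A, Real.one_le_exp (by positivity), fun K hK => ?_⟩
  set u : ℂ → ℂ := fun l => l / ‖l‖ with hu
  have hun : ∀ l : ℂ, l ≠ 0 → ‖u l‖ = 1 := fun l hl => by
    simp [hu, hl]
  have hu0 : u l₀ ≠ 0 := norm_pos_iff.1 (by rw [hun _ hl₀]; norm_num)
  have hucont : ContinuousAt u l₀ := by
    apply ContinuousAt.div continuousAt_id (by fun_prop)
    simpa using hl₀
  have hU : ∀ᶠ l in nhds l₀, l ≠ 0 ∧ |Real.log ‖l‖ - b₀| < 1 ∧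
      ∀ m ∈ Finset.range L, ‖(u l / u l₀) ^ (K * m) - 1‖ < δ₁ := by
    refine (eventually_ne_nhds hl₀).and (Eventually.and ?_ ?_)
    · have : ContinuousAt (fun l : ℂ => |Real.log ‖l‖ - b₀|) l₀ := by
        apply ContinuousAt.abs
        apply ContinuousAt.sub _ continuousAt_const
        exact ContinuousAt.log (by fun_prop) hl₀n.ne'
      apply this.eventually_lt continuousAt_const
      simp [hb₀]
    · rw [eventually_all_finset]
      intro m _
      have : ContinuousAt (fun l : ℂ => ‖(u l / u l₀) ^ (K * m) - 1‖) l₀ := by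
        apply ContinuousAt.norm
        exact (((hucont.div_const _).pow _).sub continuousAt_const)
      apply this.eventually_lt continuousAt_const
      simp [div_self hu0, hδ₁0]
  refine ⟨_, hU, fun n₀ hn₀ => ?_⟩
  have hLK : (0 : ℝ) < K * L := by positivity
  obtain ⟨b, N, hmono, hb0, hbN, hb⟩ := harmonic_grid n₀ (K * L) (δ₁ / 2) (b₀ - 1) (b₀ + 1)
    (by positivity) hLK (by positivity)
  have hbabs : ∀ p < N, |b p| ≤ |b₀| + 1 := by
    intro p hp
    have h1 := hbN p hp
    have h2 := hmono (Nat.zero_le p)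
    rw [hb0] at h2
    rw [abs_le]
    constructor
    · have := neg_abs_le b₀; linarith
    · have := le_abs_self b₀; linarith
  -- the modulus of the weight is governed by the grid, its argument by the net of the unit circle
  set κ : ℕ → ℂ := fun j => (Real.exp (-(b (j / L) * ((n₀ : ℝ) + K * j))) : ℂ) *
    ((v (j % L)).2⁻¹ * ((u l₀) ^ (K * (j % L)))⁻¹) with hκ
  have hκn : ∀ j, ‖κ j‖ = Real.exp (-(b (j / L) * ((n₀ : ℝ) + K * j))) := by
    intro j
    simp only [hκ, norm_mul, norm_inv, norm_pow, hv1 _ (Nat.mod_lt j hL), hun _ hl₀,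
      Complex.norm_real, Real.norm_eq_abs, abs_of_pos (Real.exp_pos _)]
    simp
  have hdiv : ∀ j < N * L, j / L < N := fun j hj => (Nat.div_lt_iff_lt_mul hL).2 hj
  refine ⟨N * L, κ, ?_, ?_, ?_, ?_⟩
  · intro j hj
    rw [hκn, hA, ← Real.exp_nat_mul]
    apply Real.exp_le_exp.2
    have h1 := (abs_le.1 (hbabs _ (hdiv j hj))).1
    push_cast
    have : (0 : ℝ) ≤ n₀ + K * j := by positivity
    nlinarith
  · intro j _
    apply norm_pos_iff.1
    rw [hκn]; positivity
  · intro j hj l hlj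
    rw [hκn, hκn, hA, ← Real.exp_nat_mul, ← Real.exp_add]
    apply Real.exp_le_exp.2
    have h1 := (abs_le.1 (hbabs _ (hdiv j hj))).1
    have h2 : b (l / L) ≤ b (j / L) := hmono (Nat.div_le_div_right hlj)
    have h3 : (0 : ℝ) ≤ n₀ + K * l := by positivity
    have h4 : (0 : ℝ) ≤ K * ((j : ℝ) - l) := by
      have : (l : ℝ) ≤ j := by exact_mod_cast hlj
      have : (0 : ℝ) ≤ (j : ℝ) - l := by linarith
      positivity
    push_cast [Nat.cast_sub hlj]
    nlinarith
  · rintro l ⟨hl0, hlog, hlu⟩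
    have hlog' := abs_lt.1 hlog
    obtain ⟨p, hpN, hp1, hp2⟩ := hb (Real.log ‖l‖) (by linarith) (by linarith)
    obtain ⟨m, hm, -, hm2⟩ := hnet (0, u l ^ (n₀ + K * (p * L))) (by simp [hun l hl0])
    have hjd : (p * L + m) / L = p := by
      rw [add_comm, Nat.add_mul_div_right _ _ hL, Nat.div_eq_of_lt hm, zero_add]
    have hjm : (p * L + m) % L = m := by
      rw [add_comm, Nat.add_mul_mod_self_right, Nat.mod_eq_of_lt hm]
    refine ⟨p * L + m, ?_, ?_⟩
    · calc p * L + m < p * L + L := by omega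
        _ = (p + 1) * L := by ring
        _ ≤ N * L := Nat.mul_le_mul_right _ hpN
    · have hln : (0 : ℝ) < ‖l‖ := norm_pos_iff.2 hl0
      set n := n₀ + K * (p * L + m) with hn
      have hlE : l = (Real.exp (Real.log ‖l‖) : ℂ) * u l := by
        rw [Real.exp_log hln]
        have : (‖l‖ : ℂ) ≠ 0 := by exact_mod_cast hln.ne'
        simp only [hu]; field_simp
      have hfac : l ^ n * κ (p * L + m) =
          (Real.exp ((n : ℝ) * (Real.log ‖l‖ - b p)) : ℂ) *
          ((u l ^ (n₀ + K * (p * L)) / (v m).2) * (u l / u l₀) ^ (K * m)) := by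
        have e1 : Real.exp ((n : ℝ) * (Real.log ‖l‖ - b p)) =
            Real.exp (Real.log ‖l‖) ^ n * Real.exp (-(b p * ((n₀ : ℝ) + K * (p * L + m)))) := by
          rw [← Real.exp_nat_mul, ← Real.exp_add]
          congr 1
          simp only [hn]; push_cast; ring
        have e2 : u l ^ n = u l ^ (n₀ + K * (p * L)) * u l ^ (K * m) := by
          rw [← pow_add]; congr 1; simp only [hn]; ring
        have e3 : l ^ n = (Real.exp (Real.log ‖l‖) : ℂ) ^ n * u l ^ n := by
          rw [← mul_pow, ← hlE]
        simp only [hκ, hjd, hjm]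
        rw [e3, e2, e1]
        push_cast
        rw [div_pow]
        ring
      rw [hfac]
      have hx0 : 0 ≤ (n : ℝ) * (Real.log ‖l‖ - b p) := by
        have : 0 ≤ Real.log ‖l‖ - b p := by linarith
        positivity
      have hx1 : (n : ℝ) * (Real.log ‖l‖ - b p) ≤ δ₁ / 2 := by
        have hden : (0 : ℝ) < n₀ + K * L * (p + 1) := by positivity
        rw [le_div_iff₀ hden] at hp2
        have hnle : (n : ℝ) ≤ n₀ + K * L * (p + 1) := by
          simp only [hn]; push_cast
          have : (m : ℝ) ≤ L := by exact_mod_cast hm.le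
          have hK0 : (0 : ℝ) ≤ K := by positivity
          nlinarith [mul_le_mul_of_nonneg_left this hK0]
        have h0 : 0 ≤ Real.log ‖l‖ - b p := by linarith
        nlinarith
      have f1 : ‖(Real.exp ((n : ℝ) * (Real.log ‖l‖ - b p)) : ℂ) - 1‖ ≤ δ₁ := by
        rw [← Complex.ofReal_one, ← Complex.ofReal_sub, Complex.norm_real, Real.norm_eq_abs]
        have := Real.abs_exp_sub_one_le (x := (n : ℝ) * (Real.log ‖l‖ - b p))
          (by rw [abs_of_nonneg hx0]; linarith)
        rw [abs_of_nonneg hx0] at this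
        linarith
      have f2 := norm_mul_sub_one_le (by linarith) hm2
        (hlu m (Finset.mem_range.2 hm)).le
      have f3 := norm_mul_sub_one_le (by linarith) f1 f2
      linarith

/-! ### Approximate covering for translations -/

set_option maxHeartbeats 1000000 in
/-- A coarse covering: finitely many pairs (centre, weight), with centres far apart and far from
the origin, such that every `(a, μ)` near `(a₀, μ₀)` has a multiple `n a` at bounded distance from
some centre, the weight there being comparable to `μ ^ (-n)`. The constant `C` does not depend on
the separation `R`. -/
theorem trans_covering_coarse (a₀ μ₀ : ℂ) (ha₀ : a₀ ≠ 0) (hμ₀ : μ₀ ≠ 0) :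
    ∃ C : ℝ, 1 ≤ C ∧ ∀ R : ℝ, ∃ U ∈ nhds (a₀, μ₀), ∀ ρ : ℝ, ∃ S : Finset (ℂ × ℂ),
      (∀ s ∈ S, ρ < ‖s.1‖ ∧ s.2 ≠ 0) ∧
      (∀ s ∈ S, ∀ s' ∈ S, s ≠ s' → R < ‖s.1 - s'.1‖) ∧
      ∀ p ∈ U, ∃ n : ℕ, ∃ s ∈ S, ‖n * p.1 - s.1‖ ≤ C ∧ C⁻¹ ≤ ‖p.2 ^ n * s.2‖ ∧
        ‖p.2 ^ n * s.2‖ ≤ C := by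
  classical
  set A := ‖a₀‖ with hA
  have hA0 : 0 < A := norm_pos_iff.2 ha₀
  set b₀ := Real.log ‖μ₀‖ with hb₀
  set C := Real.exp (2 * |b₀| + 3) + 4 * A with hC
  have hCe : Real.exp (2 * |b₀| + 3) ≤ C := by rw [hC]; linarith
  have hC1 : 1 ≤ C := (Real.one_le_exp (by positivity)).trans hCe
  refine ⟨C, hC1, fun R => ?_⟩
  obtain ⟨m₁, hm₁⟩ := exists_nat_gt (R / A)
  set m := m₁ + 1 with hm
  have hmR : R < A * m := by
    rw [div_lt_iff₀ hA0] at hm₁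
    have : (m : ℝ) = m₁ + 1 := by rw [hm]; push_cast; ring
    rw [this]; nlinarith
  have hm0 : (0 : ℝ) < m := by positivity
  have hm1 : (1 : ℝ) ≤ m := by rw [hm]; push_cast; linarith [Nat.cast_nonneg (α := ℝ) m₁]
  -- `a = a₀ α (1 + i τ)` with `α = Re (a / a₀)`, and `|μ| = exp (α b)`
  set q : ℂ × ℂ → ℂ := fun p => p.1 / a₀ with hq
  have hqc : Continuous q := by fun_prop
  have hq0 : q (a₀, μ₀) = 1 := by simp [hq, ha₀]
  have hrec : Continuous fun p => (q p).re := Complex.continuous_re.comp hqc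
  have himc : Continuous fun p => (q p).im := Complex.continuous_im.comp hqc
  have hU : ∀ᶠ p in nhds (a₀, μ₀), |(q p).re - 1| < 1 / 2 ∧
      ((m : ℝ) ^ 2 + 2) * |(q p).im / (q p).re| < 1 ∧ p.2 ≠ 0 ∧
      |Real.log ‖p.2‖ / (q p).re - b₀| < 1 := by
    refine Eventually.and ?_ (Eventually.and ?_ (Eventually.and ?_ ?_))
    · have : ContinuousAt (fun p => |(q p).re - 1|) (a₀, μ₀) := by fun_prop
      apply this.eventually_lt continuousAt_const
      simp [hq0]
    · have : ContinuousAt (fun p => ((m : ℝ) ^ 2 + 2) * |(q p).im / (q p).re|) (a₀, μ₀) := by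
        apply ContinuousAt.mul continuousAt_const
        apply ContinuousAt.abs
        apply ContinuousAt.div himc.continuousAt hrec.continuousAt
        simp [hq0]
      apply this.eventually_lt continuousAt_const
      simp [hq0]
    · exact (continuous_snd.continuousAt).eventually_ne hμ₀
    · have : ContinuousAt (fun p : ℂ × ℂ => |Real.log ‖p.2‖ / (q p).re - b₀|) (a₀, μ₀) := by
        apply ContinuousAt.abs
        apply ContinuousAt.sub _ continuousAt_const
        apply ContinuousAt.div _ hrec.continuousAt (by simp [hq0])
        exact ContinuousAt.log (by fun_prop) (by simpa using hμ₀)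
      apply this.eventually_lt continuousAt_const
      simp [hq0, hb₀]
  refine ⟨_, hU, fun ρ => ?_⟩
  set x₀ := (|ρ| + 1) / A + 1 with hx₀
  have hx₀0 : 0 < x₀ := by positivity
  obtain ⟨bb, N, -, hbb0, hbN, hbb⟩ := harmonic_grid x₀ ((m : ℝ) ^ 2) 1 (b₀ - 1) (b₀ + 1) hx₀0
    (by positivity) one_pos
  -- The centres are `a₀ (X l + i y)` in columns `X l = x₀ + m l`, grouped in blocks of `m`
  -- consecutive columns. The heights used in column `l` are the integers `y` congruent to `l` modulo
  -- `m`, so that centres stay apart while every integer height occurs once in each block. The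
  -- weights in block `p` are `exp (-bb p * X l)`, which is comparable to `exp (-b * X l)` when `b`
  -- is within `O (1 / X l)` of the grid point `bb p`.
  set T : ℤ := ⌈x₀ + (m : ℝ) ^ 2 * N⌉ + 1 with hT
  set X : ℕ → ℝ := fun l => x₀ + m * l with hX
  set w : ℕ × ℤ → ℂ := fun e =>
    a₀ * ((X e.1 : ℂ) + (((m * e.2 + (e.1 % m : ℕ) : ℤ) : ℝ) : ℂ) * Complex.I) with hw
  set κ : ℕ × ℤ → ℂ := fun e => (Real.exp (-(bb (e.1 / m) * X e.1)) : ℂ) with hκ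
  have hXx : ∀ l, x₀ ≤ X l := fun l => by
    simp only [hX]; have : (0 : ℝ) ≤ m * l := by positivity
    linarith
  have hwre : ∀ e e' : ℕ × ℤ, A * |X e.1 - X e'.1| ≤ ‖w e - w e'‖ := by
    intro e e'
    simp only [hw]
    rw [← mul_sub, norm_mul]
    apply mul_le_mul_of_nonneg_left _ (norm_nonneg _)
    refine le_trans (le_of_eq ?_) (Complex.abs_re_le_norm _)
    simp
  have hwim : ∀ e e' : ℕ × ℤ, A * |(((m * e.2 + (e.1 % m : ℕ) : ℤ) : ℝ)) -
      (((m * e'.2 + (e'.1 % m : ℕ) : ℤ) : ℝ))| ≤ ‖w e - w e'‖ := by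
    intro e e'
    simp only [hw]
    rw [← mul_sub, norm_mul]
    apply mul_le_mul_of_nonneg_left _ (norm_nonneg _)
    refine le_trans (le_of_eq ?_) (Complex.abs_im_le_norm _)
    simp
  refine ⟨(Finset.range (N * m) ×ˢ Finset.Icc (-T) T).image (fun e => (w e, κ e)), ?_, ?_, ?_⟩
  · intro s hs
    obtain ⟨e, -, rfl⟩ := Finset.mem_image.1 hs
    constructor
    · have h1 : A * X e.1 ≤ ‖w e‖ := by
        simp only [hw]
        rw [norm_mul]
        apply mul_le_mul_of_nonneg_left _ (norm_nonneg _)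
        refine le_trans ?_ (Complex.abs_re_le_norm _)
        simp only [Complex.add_re, Complex.ofReal_re, Complex.mul_re, Complex.I_re, mul_zero,
          Complex.ofReal_im, Complex.I_im, mul_one, sub_self, add_zero]
        exact le_abs_self _
      have h2 : A * x₀ ≤ A * X e.1 := mul_le_mul_of_nonneg_left (hXx _) hA0.le
      have h3 : A * x₀ = |ρ| + 1 + A := by rw [hx₀]; field_simp
      have := le_abs_self ρ
      simp only
      linarith
    · simp only [hκ]
      exact_mod_cast (Real.exp_pos _).ne'
  · intro s hs s' hs' hne
    obtain ⟨e, -, rfl⟩ := Finset.mem_image.1 hs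
    obtain ⟨e', -, rfl⟩ := Finset.mem_image.1 hs'
    simp only
    refine hmR.trans_le ?_
    by_cases hl : e.1 = e'.1
    · have ht : e.2 ≠ e'.2 := fun h => hne (by rw [Prod.ext hl h])
      refine le_trans ?_ (hwim e e')
      apply mul_le_mul_of_nonneg_left _ hA0.le
      rw [hl]
      push_cast
      have h1 : (1 : ℝ) ≤ |(e.2 : ℝ) - e'.2| := by
        have : (1 : ℤ) ≤ |e.2 - e'.2| := Int.one_le_abs (sub_ne_zero.2 ht)
        exact_mod_cast this
      rw [add_sub_add_right_eq_sub, ← mul_sub, abs_mul, abs_of_pos hm0]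
      nlinarith
    · refine le_trans ?_ (hwre e e')
      apply mul_le_mul_of_nonneg_left _ hA0.le
      have h1 : (1 : ℝ) ≤ |(e.1 : ℝ) - e'.1| := by
        have : (1 : ℤ) ≤ |(e.1 : ℤ) - e'.1| := Int.one_le_abs (sub_ne_zero.2 (by exact_mod_cast hl))
        exact_mod_cast this
      have h2 : X e.1 - X e'.1 = m * ((e.1 : ℝ) - e'.1) := by simp only [hX]; ring
      rw [h2, abs_mul, abs_of_pos hm0]
      nlinarith
  · rintro ⟨a, μ⟩ ⟨hα, hτ, hμ, hb⟩
    simp only at hμ hb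
    set α := (q (a, μ)).re with hαd
    set τ := (q (a, μ)).im / α with hτd
    set b := Real.log ‖μ‖ / α with hbd
    obtain ⟨hα1, hα2⟩ := abs_lt.1 hα
    have hα0 : 0 < α := by linarith
    obtain ⟨hb1, hb2⟩ := abs_lt.1 hb
    obtain ⟨p, hpN, hp1, hp2⟩ := hbb b (by linarith) (by linarith)
    set y := round ((x₀ + (m : ℝ) ^ 2 * p) * τ) with hy
    have hyr : |(x₀ + (m : ℝ) ^ 2 * p) * τ - y| ≤ 1 / 2 := abs_sub_round _
    have hmz : (0 : ℤ) < m := by rw [hm]; positivity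
    obtain ⟨s, hs⟩ := Int.eq_ofNat_of_zero_le (Int.emod_nonneg y hmz.ne')
    have hsm : s < m := by have := Int.emod_lt_of_pos y hmz; omega
    have hdm : (m : ℤ) * (y / m) + s = y := by rw [← hs]; exact Int.mul_ediv_add_emod y m
    set l := s + p * m with hl
    have hm0' : 0 < m := by omega
    have hldiv : l / m = p := by
      rw [hl, Nat.add_mul_div_right _ _ hm0', Nat.div_eq_of_lt hsm, zero_add]
    have hlmod : l % m = s := by
      rw [hl, Nat.add_mul_mod_self_right, Nat.mod_eq_of_lt hsm]
    have hτ0 := abs_nonneg τ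
    have hτ1 : |τ| ≤ 1 := by nlinarith [sq_nonneg (m : ℝ)]
    have hXl : X l = x₀ + (m : ℝ) ^ 2 * p + m * s := by
      simp only [hX, hl]; push_cast; ring
    have hsr : (s : ℝ) ≤ m := by exact_mod_cast hsm.le
    set n := ⌈X l / α⌉₊ with hn
    have hXl0 : 0 < X l := lt_of_lt_of_le hx₀0 (hXx l)
    have hn1 : X l ≤ n * α := by
      have := Nat.le_ceil (X l / α)
      rwa [div_le_iff₀ hα0] at this
    have hn2 : n * α ≤ X l + α := by
      have := (Nat.ceil_lt_add_one (div_pos hXl0 hα0).le).le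
      rw [← hn] at this
      have := mul_le_mul_of_nonneg_right this hα0.le
      rwa [add_mul, div_mul_cancel₀ _ hα0.ne', one_mul] at this
    refine ⟨n, (w (l, y / m), κ (l, y / m)), Finset.mem_image_of_mem _ ?_, ?_, ?_⟩
    · rw [Finset.mem_product, Finset.mem_range, Finset.mem_Icc]
      refine ⟨?_, ?_⟩
      · calc l < m + p * m := by omega
          _ = (p + 1) * m := by ring
          _ ≤ N * m := Nat.mul_le_mul_right _ hpN
      · have hyT : |y| ≤ T := by
          have h1 : |(x₀ + (m : ℝ) ^ 2 * p) * τ| ≤ x₀ + (m : ℝ) ^ 2 * N := by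
            rw [abs_mul, abs_of_pos (by positivity)]
            have : (p : ℝ) ≤ N := by exact_mod_cast hpN.le
            have h2 : (m : ℝ) ^ 2 * p ≤ (m : ℝ) ^ 2 * N :=
              mul_le_mul_of_nonneg_left this (by positivity)
            have h3 : 0 ≤ x₀ + (m : ℝ) ^ 2 * p := by positivity
            nlinarith
          have h2 : |(y : ℝ)| ≤ x₀ + (m : ℝ) ^ 2 * N + 1 := by
            have := abs_sub_abs_le_abs_sub (y : ℝ) ((x₀ + (m : ℝ) ^ 2 * p) * τ)
            rw [abs_sub_comm] at this
            linarith
          have h3 := Int.le_ceil (x₀ + (m : ℝ) ^ 2 * N)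
          have h4 : (|y| : ℝ) ≤ T := by rw [hT]; push_cast; linarith
          exact_mod_cast h4
        have h5 : |y / (m : ℤ)| ≤ |y| := Int.abs_ediv_le_abs _ _
        exact abs_le.1 (h5.trans hyT)
    · simp only
      have e1 : (n : ℂ) * a - w (l, y / m) = a₀ * ((((n * α - X l : ℝ)) : ℂ) +
          ((n * α * τ - y : ℝ) : ℂ) * Complex.I) := by
        have hqa : a = a₀ * ((α : ℂ) + ((α * τ : ℝ) : ℂ) * Complex.I) := by
          have h1 : α * τ = (q (a, μ)).im := by rw [hτd]; field_simp
          rw [h1, hαd, Complex.re_add_im]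
          simp only [hq]; field_simp
        simp only [hw, hlmod, hdm]
        conv_lhs => rw [hqa]
        push_cast; ring
      rw [e1, norm_mul]
      have h1 : |n * α - X l| ≤ 3 / 2 := by rw [abs_le]; constructor <;> linarith
      have h2 : |n * α * τ - y| ≤ 3 / 2 := by
        have e2 : n * α * τ - y = (n * α - X l + m * s) * τ +
            ((x₀ + (m : ℝ) ^ 2 * p) * τ - y) := by rw [hXl]; ring
        rw [e2]
        have h3 : |(n * α - X l + m * s) * τ| ≤ 1 := by
          rw [abs_mul]
          have : |n * α - X l + m * s| ≤ (m : ℝ) ^ 2 + 2 := by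
            have hms : (m : ℝ) * s ≤ m ^ 2 := by nlinarith
            have hms0 : (0 : ℝ) ≤ (m : ℝ) * s := by positivity
            have hms2 := sq_nonneg (m : ℝ)
            rw [abs_le] at h1 ⊢
            constructor <;> linarith [h1.1, h1.2]
          calc _ ≤ ((m : ℝ) ^ 2 + 2) * |τ| := mul_le_mul_of_nonneg_right this hτ0
            _ ≤ 1 := hτ.le
        exact (abs_add_le _ _).trans (by linarith)
      have h3 : ‖(((n * α - X l : ℝ)) : ℂ) + ((n * α * τ - y : ℝ) : ℂ) * Complex.I‖ ≤ 4 := by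
        refine (norm_add_le _ _).trans ?_
        rw [norm_mul, Complex.norm_I, Complex.norm_real, Complex.norm_real, Real.norm_eq_abs,
          Real.norm_eq_abs]
        linarith
      have := mul_le_mul_of_nonneg_left h3 hA0.le
      have := Real.exp_pos (2 * |b₀| + 3)
      rw [hC, ← hA]
      linarith
    · have hμ0 : 0 < ‖μ‖ := norm_pos_iff.2 hμ
      set E := (n * α - X l) * b + X l * (b - bb p) with hE
      have e1 : ‖μ ^ n * κ (l, y / m)‖ = Real.exp E := by
        simp only [hκ, hldiv]
        rw [norm_mul, norm_pow, Complex.norm_real, Real.norm_eq_abs, Real.abs_exp]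
        nth_rw 1 [← Real.exp_log hμ0]
        rw [← Real.exp_nat_mul, ← Real.exp_add]
        congr 1
        have : Real.log ‖μ‖ = α * b := by rw [hbd]; field_simp
        rw [this, hE]; ring
      have hEb : |E| ≤ 2 * |b₀| + 3 := by
        have h1 : |n * α - X l| ≤ 3 / 2 := by rw [abs_le]; constructor <;> linarith
        have h2 : |b| ≤ |b₀| + 1 := by
          have := abs_sub_abs_le_abs_sub b b₀
          linarith
        have h3 : |(n * α - X l) * b| ≤ 3 / 2 * (|b₀| + 1) := by
          rw [abs_mul]
          exact mul_le_mul h1 h2 (abs_nonneg _) (by norm_num)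
        have hbp : 0 ≤ b - bb p := by linarith
        have h4 : |X l * (b - bb p)| ≤ 1 := by
          rw [abs_of_nonneg (by positivity)]
          rw [le_div_iff₀ (by positivity)] at hp2
          have : X l ≤ x₀ + (m : ℝ) ^ 2 * (p + 1) := by rw [hXl]; nlinarith
          nlinarith
        have := abs_add_le ((n * α - X l) * b) (X l * (b - bb p))
        have := abs_nonneg b₀
        rw [hE]; linarith
      rw [e1]
      constructor
      · refine (inv_anti₀ (Real.exp_pos _) hCe).trans ?_
        rw [← Real.exp_neg]
        exact Real.exp_le_exp.2 (by have := neg_abs_le E; linarith)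
      · exact (Real.exp_le_exp.2 ((le_abs_self E).trans hEb)).trans hCe

/-- The fine covering: as in `trans_covering_coarse`, but with both errors below a prescribed `δ`.
Each coarse centre is split into finitely many well separated ones, reached by additional iterates
`K m`, according to a net of the possible (displacement, weight ratio) pairs. -/
theorem trans_covering (a₀ μ₀ : ℂ) (ha₀ : a₀ ≠ 0) (hμ₀ : μ₀ ≠ 0) (δ : ℝ) (hδ : 0 < δ) (R : ℝ) :
    ∃ U ∈ nhds (a₀, μ₀), ∀ ρ : ℝ, ∃ S : Finset (ℂ × ℂ),
      (∀ s ∈ S, ρ < ‖s.1‖) ∧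
      (∀ s ∈ S, ∀ s' ∈ S, s ≠ s' → R < ‖s.1 - s'.1‖) ∧
      ∀ p ∈ U, ∃ n : ℕ, ∃ s ∈ S, ‖n * p.1 - s.1‖ ≤ δ ∧ ‖p.2 ^ n * s.2 - 1‖ ≤ δ := by
  classical
  obtain ⟨C, hC1, hcoarse⟩ := trans_covering_coarse a₀ μ₀ ha₀ hμ₀
  set A := ‖a₀‖ with hA
  have hA0 : 0 < A := norm_pos_iff.2 ha₀
  have hC0 : 0 < C := by linarith
  set δ₁ := min δ 1 / 5 with hδ₁
  have hδ₁0 : 0 < δ₁ := by positivity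
  have hδ₁1 : δ₁ ≤ 1 / 5 := by rw [hδ₁]; have := min_le_right δ 1; linarith
  have hδ₁δ : 5 * δ₁ ≤ δ := by rw [hδ₁]; have := min_le_left δ 1; linarith
  have hYc : IsCompact (closedBall (0 : ℂ) C ×ˢ {ζ : ℂ | C⁻¹ ≤ ‖ζ‖ ∧ ‖ζ‖ ≤ C}) := by
    apply (isCompact_closedBall _ _).prod
    apply (isCompact_closedBall (0 : ℂ) C).of_isClosed_subset
    · exact (isClosed_le continuous_const continuous_norm).inter
        (isClosed_le continuous_norm continuous_const)
    · intro ζ hζ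
      simpa using hζ.2
  obtain ⟨L, v, hv, hnet⟩ := exists_ratio_net _ hYc (by
    rintro ⟨y1, y2⟩ ⟨-, hy⟩ h
    simp only at h
    have := hy.1
    rw [h, norm_zero] at this
    exact absurd this (not_le.2 (inv_pos.2 hC0))) δ₁ hδ₁0
  have hv1 : ∀ m < L, ‖(v m).1‖ ≤ C := fun m hm => by simpa using (hv m hm).1
  obtain ⟨K, hK⟩ := exists_nat_gt ((|R| + 2 * C + 1) / A)
  rw [div_lt_iff₀ hA0] at hK
  obtain ⟨U, hU, hcov⟩ := hcoarse (|R| + 2 * C + K * L * A + 1)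
  have hU' : ∀ᶠ p in nhds (a₀, μ₀), p ∈ U ∧ ∀ m ∈ Finset.range L,
      ‖((K * m : ℕ) : ℂ) * (p.1 - a₀)‖ < δ₁ ∧ ‖(p.2 / μ₀) ^ (K * m) - 1‖ < δ₁ := by
    refine Eventually.and hU ?_
    rw [eventually_all_finset]
    intro m _
    refine Eventually.and ?_ ?_
    · have : ContinuousAt (fun p : ℂ × ℂ => ‖((K * m : ℕ) : ℂ) * (p.1 - a₀)‖) (a₀, μ₀) := by
        fun_prop
      apply this.eventually_lt continuousAt_const
      simp [hδ₁0]
    · have : ContinuousAt (fun p : ℂ × ℂ => ‖(p.2 / μ₀) ^ (K * m) - 1‖) (a₀, μ₀) := by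
        fun_prop
      apply this.eventually_lt continuousAt_const
      simp [hδ₁0, hμ₀]
  refine ⟨_, hU', fun ρ => ?_⟩
  obtain ⟨S, hS1, hS2, hS3⟩ := hcov (ρ + C + K * L * A)
  have hshift : ∀ m < L, ∀ m' < L, ‖(K * m - K * m' : ℂ) * a₀‖ ≤ K * L * A := by
    intro m hm m' hm'
    rw [norm_mul, ← mul_sub, norm_mul, Complex.norm_natCast, ← hA]
    apply mul_le_mul_of_nonneg_right _ hA0.le
    apply mul_le_mul_of_nonneg_left _ (Nat.cast_nonneg _)
    have : ((m : ℂ) - m') = (((m : ℝ) - m' : ℝ) : ℂ) := by push_cast; ring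
    rw [this, Complex.norm_real, Real.norm_eq_abs, abs_le]
    have h1 : (m : ℝ) ≤ L := by exact_mod_cast hm.le
    have h2 : (m' : ℝ) ≤ L := by exact_mod_cast hm'.le
    have h3 : (0 : ℝ) ≤ m := Nat.cast_nonneg _
    have h4 : (0 : ℝ) ≤ m' := Nat.cast_nonneg _
    constructor <;> linarith
  -- the copy of a coarse centre attached to a point of the net is moved by the displacement in the
  -- net, and by `K m a₀` in order to be far from the other copies
  set F : (ℂ × ℂ) × ℕ → ℂ × ℂ := fun e =>
    (e.1.1 + (v e.2).1 + (K * e.2) * a₀, e.1.2 * ((v e.2).2⁻¹ * (μ₀ ^ (K * e.2))⁻¹)) with hF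
  refine ⟨(S ×ˢ Finset.range L).image F, ?_, ?_, ?_⟩
  · intro s hs
    obtain ⟨e, he, rfl⟩ := Finset.mem_image.1 hs
    rw [Finset.mem_product, Finset.mem_range] at he
    have h1 := (hS1 _ he.1).1
    have h2 := hv1 _ he.2
    have h3 : ‖(K * e.2 : ℂ) * a₀‖ ≤ K * L * A := by
      have := hshift e.2 he.2 0 (by omega)
      simpa using this
    have h4 : ‖e.1.1‖ ≤ ‖(F e).1‖ + ‖(v e.2).1‖ + ‖(K * e.2 : ℂ) * a₀‖ := by
      have : e.1.1 = (F e).1 - (v e.2).1 - (K * e.2) * a₀ := by simp only [hF]; ring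
      nth_rw 1 [this]
      refine (norm_sub_le _ _).trans ?_
      have := norm_sub_le (F e).1 (v e.2).1
      linarith
    linarith
  · intro s hs s' hs' hne
    obtain ⟨⟨s, m⟩, he, rfl⟩ := Finset.mem_image.1 hs
    obtain ⟨⟨s', m'⟩, he', rfl⟩ := Finset.mem_image.1 hs'
    rw [Finset.mem_product, Finset.mem_range] at he he'
    simp only at he he'
    have h1 := hv1 _ he.2
    have h2 := hv1 _ he'.2
    have hR := le_abs_self R
    by_cases hss : s = s'
    · have hmm : m ≠ m' := fun h => hne (by rw [hss, h])
      have h3 : K * A ≤ ‖(K * m - K * m' : ℂ) * a₀‖ := by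
        rw [norm_mul, ← mul_sub, norm_mul, Complex.norm_natCast, ← hA]
        apply mul_le_mul_of_nonneg_right _ hA0.le
        have : ((m : ℂ) - m') = (((m : ℝ) - m' : ℝ) : ℂ) := by push_cast; ring
        rw [this, Complex.norm_real, Real.norm_eq_abs]
        have h1 : (1 : ℝ) ≤ |(m : ℝ) - m'| := by
          have : (1 : ℤ) ≤ |(m : ℤ) - m'| :=
            Int.one_le_abs (sub_ne_zero.2 (by exact_mod_cast hmm))
          exact_mod_cast this
        have := Nat.cast_nonneg (α := ℝ) K
        nlinarith
      have h4 : (K * m - K * m' : ℂ) * a₀ =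
          ((F (s, m)).1 - (F (s', m')).1) - (v m).1 + (v m').1 := by
        simp only [hF, hss]; ring
      rw [h4] at h3
      have h5 := norm_add_le (((F (s, m)).1 - (F (s', m')).1) - (v m).1) (v m').1
      have h6 := norm_sub_le ((F (s, m)).1 - (F (s', m')).1) (v m).1
      linarith
    · have h3 := hS2 s he.1 s' he'.1 hss
      have h7 := hshift m he.2 m' he'.2
      have h4 : s.1 - s'.1 = ((F (s, m)).1 - (F (s', m')).1) - (v m).1 + (v m').1 -
          (K * m - K * m' : ℂ) * a₀ := by
        simp only [hF]; ring
      rw [h4] at h3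
      have h5 := norm_add_le (((F (s, m)).1 - (F (s', m')).1) - (v m).1) (v m').1
      have h6 := norm_sub_le ((F (s, m)).1 - (F (s', m')).1) (v m).1
      have h8 := norm_sub_le (((F (s, m)).1 - (F (s', m')).1) - (v m).1 + (v m').1)
        ((K * m - K * m' : ℂ) * a₀)
      linarith
  · rintro ⟨a, μ⟩ ⟨hpU, hp⟩
    obtain ⟨n, s, hs, h1, h2, h3⟩ := hS3 _ hpU
    obtain ⟨m, hm, h4, h5⟩ := hnet (n * a - s.1, μ ^ n * s.2) ⟨by simpa using h1, h2, h3⟩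
    obtain ⟨h6, h7⟩ := hp m (Finset.mem_range.2 hm)
    simp only at h4 h5 h6 h7
    refine ⟨n + K * m, F (s, m), Finset.mem_image_of_mem _ (by simp [hs, hm]), ?_, ?_⟩
    · have e : ((n + K * m : ℕ) : ℂ) * a - (F (s, m)).1 =
          (n * a - s.1 - (v m).1) + ((K * m : ℕ) : ℂ) * (a - a₀) := by
        simp only [hF]; push_cast; ring
      simp only [e]
      exact (norm_add_le _ _).trans (by linarith)
    · have e : μ ^ (n + K * m) * (F (s, m)).2 =
          (μ ^ n * s.2 / (v m).2) * (μ / μ₀) ^ (K * m) := by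
        simp only [hF]; rw [pow_add, div_pow]; ring
      simp only [e]
      have := norm_mul_sub_one_le (by linarith) h5 h7.le
      linarith

/-! ### Approximation on separated discs -/

/-- A finite family of discs, given by centre and radius, which are at distance at least `1` from
one another. -/
def Separated (Z : Finset (ℂ × ℝ)) : Prop :=
  (∀ s ∈ Z, 0 ≤ s.2) ∧ ∀ s ∈ Z, ∀ s' ∈ Z, s ≠ s' → s.2 + s'.2 + 1 ≤ dist s.1 s'.1

theorem Separated.insert_zero [DecidableEq (ℂ × ℝ)] {Z : Finset (ℂ × ℝ)} (hZ : Separated Z) {ρ : ℝ}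
    (hρ : 0 ≤ ρ) (h : ∀ s ∈ Z, ρ + s.2 + 1 ≤ ‖s.1‖) : Separated (insert ((0 : ℂ), ρ) Z) := by
  constructor
  · intro s hs
    rcases Finset.mem_insert.1 hs with rfl | hs
    · exact hρ
    · exact hZ.1 s hs
  · intro s hs s' hs' hne
    rcases Finset.mem_insert.1 hs with rfl | hs <;> rcases Finset.mem_insert.1 hs' with rfl | hs'
    · exact absurd rfl hne
    · have := h s' hs'
      simpa using this
    · have := h s hs
      simp only [dist_zero_right]
      linarith
    · have := hZ.2 s hs s' hs' hne
      exact this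

/-- Runge approximation on separated discs by polynomials vanishing to order `M` at the origin. -/
theorem runge_separated (Z : Finset (ℂ × ℝ)) (hZ : Separated Z) (g : ℂ × ℝ → ℂ → ℂ)
    (hg : ∀ s ∈ Z, DifferentiableOn ℂ (g s) (ball s.1 (s.2 + 1))) (M : ℕ) (η : ℝ) (hη : 0 < η) :
    ∃ q : Polynomial ℂ, ∀ s ∈ Z, ∀ z ∈ closedBall s.1 s.2,
      ‖(Polynomial.X ^ M * q).eval z - z ^ M * g s z‖ ≤ η ∧ ‖q.eval z - g s z‖ ≤ η := by
  -- a bound `B ≥ 1` for `|z|` on all the discs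
  set B : ℝ := 1 + ∑ s ∈ Z, (‖s.1‖ + s.2) with hB
  have hnn : ∀ s ∈ Z, 0 ≤ ‖s.1‖ + s.2 := fun s hs => by
    have := hZ.1 s hs; positivity
  have hB1 : 1 ≤ B := by rw [hB]; have := Finset.sum_nonneg hnn; linarith
  have hBs : ∀ s ∈ Z, ∀ z ∈ closedBall s.1 s.2, ‖z‖ ≤ B := by
    intro s hs z hz
    have h1 := Finset.single_le_sum hnn hs
    rw [mem_closedBall, dist_eq_norm] at hz
    have h2 : ‖z‖ ≤ ‖z - s.1‖ + ‖s.1‖ := by simpa using norm_add_le (z - s.1) s.1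
    rw [hB]; linarith
  have hBM : 1 ≤ B ^ M := one_le_pow₀ hB1
  obtain ⟨q, hq⟩ := runge_discs Z (fun s => s.1) (fun s => s.2) (fun s => s.2 + 1) hZ.1
    (fun s _ => by simp) (fun s hs s' hs' hne => by
      have := hZ.2 s hs s' hs' hne
      linarith) g hg (η / B ^ M) (by positivity)
  refine ⟨q, fun s hs z hz => ?_⟩
  have h1 := hq s hs z hz
  constructor
  · rw [Polynomial.eval_mul, Polynomial.eval_pow, Polynomial.eval_X, ← mul_sub, norm_mul, norm_pow]
    rw [le_div_iff₀ (by positivity)] at h1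
    refine le_trans ?_ h1
    rw [mul_comm]
    apply mul_le_mul_of_nonneg_left _ (norm_nonneg _)
    exact pow_le_pow_left₀ (norm_nonneg _) (hBs s hs z hz) M
  · exact h1.trans (div_le_self hη.le hBM)

/-- A polynomial with lowest order term `z ^ M`, as small as desired on given discs. -/
theorem exists_start (Z : Finset (ℂ × ℝ)) (hZ : Separated Z) (hZ1 : ∀ s ∈ Z, 1 + s.2 + 1 ≤ ‖s.1‖)
    (M : ℕ) (η : ℝ) (hη : 0 < η) :
    ∃ v : Polynomial ℂ, Polynomial.X ^ M ∣ v ∧ v.coeff M = 1 ∧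
      ∀ s ∈ Z, ∀ z ∈ closedBall s.1 s.2, ‖v.eval z‖ ≤ η := by
  classical
  obtain ⟨q, hq⟩ := runge_separated _ (hZ.insert_zero zero_le_one hZ1)
    (fun s z => if s = (0, 1) then 1 else 0) (fun s _ => by
      by_cases h : s = (0, 1) <;> simp only [h, if_true, if_false] <;>
      exact differentiableOn_const _) M (min (1 / 2) (η / 2)) (by positivity)
  have h0 := (hq (0, 1) (Finset.mem_insert_self _ _) 0 (by simp)).2
  simp only [if_true] at h0
  have h0' : ‖q.eval 0 - 1‖ ≤ 1 / 2 := h0.trans (min_le_left _ _)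
  have h1 : 1 / 2 ≤ ‖q.eval 0‖ := by
    have := norm_sub_norm_le (1 : ℂ) (q.eval 0)
    rw [norm_sub_rev, norm_one] at this
    linarith
  have hne : q.eval 0 ≠ 0 := norm_pos_iff.1 (by linarith)
  refine ⟨Polynomial.C (q.eval 0)⁻¹ * (Polynomial.X ^ M * q), ?_, ?_, ?_⟩
  · exact Dvd.dvd.mul_left (Dvd.intro _ rfl) _
  · rw [Polynomial.coeff_C_mul, Polynomial.coeff_X_pow_mul', if_pos le_rfl, Nat.sub_self,
      Polynomial.coeff_zero_eq_eval_zero, inv_mul_cancel₀ hne]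
  · intro s hs z hz
    have h2 := (hq s (Finset.mem_insert_of_mem hs) z hz).1
    have hs0 : s ≠ (0, 1) := by
      rintro rfl
      have := hZ1 _ hs
      norm_num at this
    rw [if_neg hs0, mul_zero, sub_zero] at h2
    have h3 : ‖(Polynomial.X ^ M * q).eval z‖ ≤ η / 2 := h2.trans (min_le_right _ _)
    rw [Polynomial.eval_mul, Polynomial.eval_C, norm_mul, norm_inv]
    have h4 : ‖q.eval 0‖⁻¹ ≤ 2 := by
      rw [inv_le_comm₀ (by linarith) (by norm_num)]; linarith
    calc _ ≤ 2 * (η / 2) := mul_le_mul h4 h3 (norm_nonneg _) (by norm_num)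
      _ = η := by ring

/-! ### The patch for translations -/

/-- The patch for translations. The neighbourhood `U` depends only on the target `G`, the radius
`r` and the accuracy `e`. For every `(a, μ) ∈ U` some iterate of `μ T_a` maps `P i₀ + u i₀` close
to `G` and the other `P i + u i` close to `0`, where the corrections `u i` are small on an
arbitrarily large disc and vanish to arbitrarily high order at the origin. -/
theorem trans_patch (G : Polynomial ℂ) (r e : ℝ) (hr : 0 ≤ r) (he : 0 < e) (a₀ μ₀ : ℂ)
    (ha₀ : a₀ ≠ 0) (hμ₀ : μ₀ ≠ 0) :
    ∃ U ∈ nhds (a₀, μ₀), ∀ (P : ℕ → Polynomial ℂ) (k i₀ M : ℕ) (ρ η : ℝ), 0 ≤ ρ → 0 < η →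
      ∃ (Z : Finset (ℂ × ℝ)) (W : ℝ) (u : ℕ → Polynomial ℂ), Separated Z ∧
        (∀ s ∈ Z, ρ + s.2 + 1 ≤ ‖s.1‖) ∧ (∀ i, Polynomial.X ^ M ∣ u i) ∧
        (∀ i ≤ k, ∀ z ∈ closedBall (0 : ℂ) ρ, ‖(u i).eval z‖ ≤ η) ∧
        ∀ p ∈ U, ∃ n : ℕ, ‖p.2‖ ^ n ≤ W ∧
          (∃ s ∈ Z, closedBall (n * p.1) r ⊆ closedBall s.1 s.2) ∧
          ∀ i ≤ k, ∀ z ∈ closedBall (0 : ℂ) r,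
            ‖p.2 ^ n * (P i + u i).eval (z + n * p.1) - (if i = i₀ then G.eval z else 0)‖ ≤
              (if i = i₀ then e else 0) + η := by
  classical
  obtain ⟨B, hB⟩ := (isCompact_closedBall (0 : ℂ) (r + 1)).exists_bound_of_continuousOn
    (f := fun z => G.eval z) G.continuous.continuousOn
  have hB0 : 0 ≤ B := (norm_nonneg _).trans (hB 0 (by simp; linarith))
  have huc := (isCompact_closedBall (0 : ℂ) (r + 1)).uniformContinuousOn_of_continuous
    (f := fun z => G.eval z) G.continuous.continuousOn
  obtain ⟨δ₀, hδ₀, hδ⟩ := Metric.uniformContinuousOn_iff.1 huc (e / 2) (by positivity)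
  set δ := min (min (δ₀ / 2) (1 / 2)) (e / (2 * (B + 1))) with hδd
  have hδpos : 0 < δ := by positivity
  have hδ1 : δ ≤ 1 / 2 := (min_le_left _ _).trans (min_le_right _ _)
  have hδ2 : δ < δ₀ := by
    have : δ ≤ δ₀ / 2 := (min_le_left _ _).trans (min_le_left _ _)
    linarith
  have hδ3 : δ * B ≤ e / 2 := by
    have : δ ≤ e / (2 * (B + 1)) := min_le_right _ _
    rw [le_div_iff₀ (by positivity)] at this
    nlinarith
  obtain ⟨U, hU, hcov⟩ := trans_covering a₀ μ₀ ha₀ hμ₀ δ hδpos (2 * (r + 1) + 1)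
  refine ⟨U, hU, fun P k i₀ M ρ η hρ hη => ?_⟩
  obtain ⟨S, hS1, hS2, hS3⟩ := hcov (ρ + (r + 1) + 1)
  set Z : Finset (ℂ × ℝ) := S.image (fun s => (s.1, r + 1)) with hZ
  set W : ℝ := ∑ s ∈ S, 2 / ‖s.2‖ with hW
  have hZsep : Separated Z := by
    constructor
    · intro s hs
      obtain ⟨t, -, rfl⟩ := Finset.mem_image.1 hs
      simp only; linarith
    · intro s hs s' hs' hne
      obtain ⟨t, ht, rfl⟩ := Finset.mem_image.1 hs
      obtain ⟨t', ht', rfl⟩ := Finset.mem_image.1 hs'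
      have := hS2 t ht t' ht' (fun h => hne (by rw [h]))
      simp only [dist_eq_norm]
      linarith
  have hZρ : ∀ s ∈ Z, ρ + s.2 + 1 ≤ ‖s.1‖ := by
    intro s hs
    obtain ⟨t, ht, rfl⟩ := Finset.mem_image.1 hs
    exact (hS1 t ht).le
  -- the weight attached to a disc is recovered from its centre, since distinct elements of `S`
  -- have distinct centres
  have hκ : ∃ κ : ℂ → ℂ, ∀ s ∈ S, κ s.1 = s.2 := by
    refine ⟨fun c => if h : ∃ s ∈ S, s.1 = c then h.choose.2 else 0, fun s hs => ?_⟩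
    have h : ∃ t ∈ S, t.1 = s.1 := ⟨s, hs, rfl⟩
    simp only [h, dif_pos]
    have h1 := h.choose_spec
    by_contra hne
    have := hS2 _ h1.1 s hs (fun h' => hne (by rw [h']))
    rw [h1.2, sub_self, norm_zero] at this
    linarith
  obtain ⟨κ, hκ⟩ := hκ
  have hW0 : 0 ≤ W := Finset.sum_nonneg fun s _ => by positivity
  have hu : ∀ i, ∃ u : Polynomial ℂ, Polynomial.X ^ M ∣ u ∧
      (∀ z ∈ closedBall (0 : ℂ) ρ, ‖u.eval z‖ ≤ η) ∧
      ∀ s ∈ S, ∀ z ∈ closedBall s.1 (r + 1),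
        ‖(P i + u).eval z - if i = i₀ then s.2 * G.eval (z - s.1) else 0‖ ≤ η / (W + 1) := by
    intro i
    obtain ⟨q, hq⟩ := runge_separated _ (hZsep.insert_zero hρ hZρ)
      (fun s z => if s = (0, ρ) then 0 else
        ((if i = i₀ then κ s.1 * G.eval (z - s.1) else 0) - (P i).eval z) / z ^ M) (fun s hs => by
        by_cases h : s = (0, ρ)
        · simp only [h, if_true]
          exact differentiableOn_const _
        · simp only [h, if_false]
          have hs' := (Finset.mem_insert.1 hs).resolve_left h
          have hz : ∀ z ∈ ball s.1 (s.2 + 1), z ^ M ≠ 0 := by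
            rintro z hz
            apply pow_ne_zero
            rintro rfl
            have := hZρ s hs'
            rw [mem_ball, dist_eq_norm, zero_sub, norm_neg] at hz
            linarith
          apply DifferentiableOn.div _ (by fun_prop) hz
          apply DifferentiableOn.sub _ (P i).differentiable.differentiableOn
          by_cases hi : i = i₀
          · simp only [hi, if_true]
            apply DifferentiableOn.const_mul
            exact (G.differentiable.comp (differentiable_id.sub_const s.1)).differentiableOn
          · simp only [hi, if_false]
            exact differentiableOn_const _) M (min η (η / (W + 1))) (by positivity)
    refine ⟨Polynomial.X ^ M * q, Dvd.intro _ rfl, fun z hz => ?_, fun s hs z hz => ?_⟩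
    · have := (hq (0, ρ) (Finset.mem_insert_self _ _) z hz).1
      simp only [if_true, mul_zero, sub_zero] at this
      exact this.trans (min_le_left _ _)
    · have hsZ : (s.1, r + 1) ∈ Z := Finset.mem_image_of_mem _ hs
      have h1 := (hq (s.1, r + 1) (Finset.mem_insert_of_mem hsZ) z hz).1
      have h2 := hZρ _ hsZ
      have h3 : (s.1, r + 1) ≠ ((0 : ℂ), ρ) := by
        intro h
        have h4 : s.1 = 0 := congrArg Prod.fst h
        simp only [h4, norm_zero] at h2
        linarith
      have h4 : z ^ M ≠ 0 := by
        apply pow_ne_zero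
        rintro rfl
        rw [mem_closedBall, dist_eq_norm, zero_sub, norm_neg] at hz
        simp only at h2
        linarith
      simp only [if_neg h3, hκ s hs] at h1
      rw [mul_div_cancel₀ _ h4] at h1
      refine le_trans (le_of_eq ?_) (h1.trans (min_le_right _ _))
      rw [Polynomial.eval_add]
      congr 1
      ring
  choose u hu1 hu2 hu3 using hu
  refine ⟨Z, W, u, hZsep, hZρ, hu1, fun i _ => hu2 i, ?_⟩
  rintro ⟨a, μ⟩ hp
  obtain ⟨n, s, hs, h1, h2⟩ := hS3 _ hp
  simp only at h1 h2
  have hs0 : s.2 ≠ 0 := by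
    intro h
    rw [h, mul_zero, zero_sub, norm_neg, norm_one] at h2
    linarith
  have hs0' : 0 < ‖s.2‖ := norm_pos_iff.2 hs0
  have hμW : ‖μ‖ ^ n ≤ W := by
    have h3 : ‖μ ^ n * s.2‖ ≤ 2 := by
      have := norm_add_le (μ ^ n * s.2 - 1) 1
      rw [sub_add_cancel, norm_one] at this
      linarith
    rw [norm_mul, norm_pow, ← le_div_iff₀ hs0'] at h3
    exact h3.trans (Finset.single_le_sum (f := fun s : ℂ × ℂ => 2 / ‖s.2‖)
      (fun s _ => by positivity) hs)
  have hdisc : closedBall (n * a) r ⊆ closedBall s.1 (r + 1) := by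
    apply closedBall_subset_closedBall'
    rw [dist_eq_norm]
    linarith
  refine ⟨n, hμW, ⟨(s.1, r + 1), Finset.mem_image_of_mem _ hs, hdisc⟩, fun i _ z hz => ?_⟩
  have hzr : ‖z‖ ≤ r := by simpa using hz
  have hz' : z + n * a ∈ closedBall s.1 (r + 1) := hdisc (by simpa using hz)
  have h3 := hu3 i s hs _ hz'
  have h4 : ‖μ‖ ^ n * (η / (W + 1)) ≤ η := by
    calc _ ≤ (W + 1) * (η / (W + 1)) :=
          mul_le_mul_of_nonneg_right (by linarith) (by positivity)
      _ = η := by field_simp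
  simp only
  have h5 : ‖μ ^ n * (if i = i₀ then s.2 * G.eval (z + n * a - s.1) else 0) -
      (if i = i₀ then G.eval z else 0)‖ ≤ if i = i₀ then e else 0 := by
    by_cases hi : i = i₀
    · simp only [hi, if_true]
      have hz1 : z + n * a - s.1 ∈ closedBall (0 : ℂ) (r + 1) := by
        rw [mem_closedBall, dist_eq_norm] at hz'
        simpa using hz'
      have hz2 : z ∈ closedBall (0 : ℂ) (r + 1) := by simp; linarith
      have h6 := hδ _ hz1 _ hz2 (by
        rw [dist_eq_norm]
        have : z + n * a - s.1 - z = n * a - s.1 := by ring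
        rw [this]
        linarith)
      rw [dist_eq_norm] at h6
      have e1 : μ ^ n * (s.2 * G.eval (z + n * a - s.1)) - G.eval z =
          (μ ^ n * s.2 - 1) * G.eval (z + n * a - s.1) +
          (G.eval (z + n * a - s.1) - G.eval z) := by ring
      rw [e1]
      refine (norm_add_le _ _).trans ?_
      rw [norm_mul]
      have := mul_le_mul h2 (hB _ hz1) (norm_nonneg _) hδpos.le
      linarith
    · simp [hi]
  have e2 : μ ^ n * (P i + u i).eval (z + n * a) - (if i = i₀ then G.eval z else 0) =
      (μ ^ n * (if i = i₀ then s.2 * G.eval (z + n * a - s.1) else 0) -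
      (if i = i₀ then G.eval z else 0)) + μ ^ n * ((P i + u i).eval (z + n * a) -
      (if i = i₀ then s.2 * G.eval (z + n * a - s.1) else 0)) := by ring
  rw [e2]
  refine (norm_add_le _ _).trans ?_
  rw [norm_mul, norm_pow]
  have := mul_le_mul_of_nonneg_left h3 (pow_nonneg (norm_nonneg μ) n)
  linarith

/-! ### Antiderivatives and the patch for differentiation -/

/-- The `n`-fold antiderivative of a polynomial which vanishes to order `n` at the origin. -/
noncomputable def integ (n : ℕ) (G : Polynomial ℂ) : Polynomial ℂ :=
  ∑ m ∈ Finset.range (G.natDegree + 1),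
    Polynomial.monomial (m + n) (G.coeff m * (m.factorial / (m + n).factorial))

theorem integ_zero (G : Polynomial ℂ) : integ 0 G = G := by
  conv_rhs => rw [G.as_sum_range]
  apply Finset.sum_congr rfl
  intro m _
  have : (m.factorial : ℂ) ≠ 0 := by exact_mod_cast m.factorial_ne_zero
  simp [div_self this]

theorem derivative_integ (n : ℕ) (G : Polynomial ℂ) :
    Polynomial.derivative (integ (n + 1) G) = integ n G := by
  simp only [integ, Polynomial.derivative_sum]
  apply Finset.sum_congr rfl
  intro m _
  rw [Polynomial.derivative_monomial]
  have h1 : m + (n + 1) - 1 = m + n := by omega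
  have h2 : (((m + (n + 1)).factorial : ℕ) : ℂ) =
      ((m + (n + 1) : ℕ) : ℂ) * ((m + n).factorial : ℂ) := by
    rw [← Nat.cast_mul, ← add_assoc, Nat.factorial_succ]
  have h3 : ((m + n).factorial : ℂ) ≠ 0 := by exact_mod_cast (m + n).factorial_ne_zero
  have h4 : ((m + (n + 1) : ℕ) : ℂ) ≠ 0 := by exact_mod_cast (by omega : m + (n + 1) ≠ 0)
  rw [h1, h2]
  congr 1
  field_simp

theorem iterate_derivative_integ (n d : ℕ) (G : Polynomial ℂ) :
    Polynomial.derivative^[n] (integ (n + d) G) = integ d G := by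
  induction n with
  | zero => simp
  | succ n ih =>
    rw [Function.iterate_succ_apply, show n + 1 + d = (n + d) + 1 by ring, derivative_integ, ih]

theorem iterate_derivative_integ_eq_zero (n K : ℕ) (G : Polynomial ℂ) (hK : G.natDegree < K) :
    Polynomial.derivative^[K + n] (integ n G) = 0 := by
  have := iterate_derivative_integ n 0 G
  rw [add_zero, integ_zero] at this
  rw [Function.iterate_add_apply, this]
  exact Polynomial.iterate_derivative_eq_zero hK

theorem X_pow_dvd_integ (n M : ℕ) (hM : M ≤ n) (G : Polynomial ℂ) :
    Polynomial.X ^ M ∣ integ n G := by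
  apply Finset.dvd_sum
  intro m _
  rw [← Polynomial.C_mul_X_pow_eq_monomial]
  exact Dvd.dvd.mul_left (pow_dvd_pow _ (by omega)) _

theorem norm_integ_le (G : Polynomial ℂ) (r : ℝ) (hr : 0 ≤ r) :
    ∃ B : ℝ, 0 ≤ B ∧ ∀ n : ℕ, ∀ z ∈ closedBall (0 : ℂ) r,
      ‖(integ n G).eval z‖ ≤ B * (r ^ n / n.factorial) := by
  refine ⟨∑ m ∈ Finset.range (G.natDegree + 1), ‖G.coeff m‖ * r ^ m,
    Finset.sum_nonneg fun m _ => by positivity, fun n z hz => ?_⟩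
  have hz' : ‖z‖ ≤ r := by simpa using hz
  rw [integ, Polynomial.eval_finsetSum, Finset.sum_mul]
  refine (norm_sum_le _ _).trans (Finset.sum_le_sum fun m _ => ?_)
  rw [Polynomial.eval_monomial, norm_mul, norm_mul, norm_pow, norm_div, Complex.norm_natCast,
    Complex.norm_natCast]
  have h1 : ‖z‖ ^ (m + n) ≤ r ^ m * r ^ n := by
    rw [← pow_add]; exact pow_le_pow_left₀ (norm_nonneg _) hz' _
  have h2 : (m.factorial : ℝ) / (m + n).factorial ≤ 1 / n.factorial := by
    have h0 : (0 : ℝ) < (m + n).factorial := by exact_mod_cast (m + n).factorial_pos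
    have h0' : (0 : ℝ) < n.factorial := by exact_mod_cast n.factorial_pos
    rw [div_le_div_iff₀ h0 h0', one_mul]
    have := Nat.le_of_dvd (m + n).factorial_pos (Nat.factorial_mul_factorial_dvd_factorial_add m n)
    exact_mod_cast this
  calc _ ≤ (‖G.coeff m‖ * (1 / n.factorial)) * (r ^ m * r ^ n) := by
        apply mul_le_mul _ h1 (by positivity) (by positivity)
        exact mul_le_mul_of_nonneg_left h2 (norm_nonneg _)
    _ = _ := by ring

theorem exists_factorial_tail (x η : ℝ) (hη : 0 < η) :
    ∃ N : ℕ, ∀ t : Finset ℕ, (∀ n ∈ t, N ≤ n) → ∑ n ∈ t, x ^ n / n.factorial < η := by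
  obtain ⟨s, hs⟩ := summable_iff_vanishing_norm.1 (Real.summable_pow_div_factorial x) η hη
  refine ⟨s.sup id + 1, fun t ht => (le_abs_self _).trans_lt (hs t ?_)⟩
  rw [Finset.disjoint_left]
  intro n hn hns
  have := ht n hn
  have := Finset.le_sup (f := id) hns
  simp only [id] at this
  omega

/-- The patch for multiples of differentiation, the counterpart of `trans_patch`: the correction
is a combination of antiderivatives of `G` whose orders form an arithmetic progression. -/
theorem deriv_patch (G : Polynomial ℂ) (r e : ℝ) (hr : 0 ≤ r) (he : 0 < e) (l₀ : ℂ)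
    (hl₀ : l₀ ≠ 0) :
    ∃ U ∈ nhds l₀, ∀ (M : ℕ) (ρ η : ℝ), 0 ≤ ρ → 0 < η →
      ∃ (N : ℕ) (W : ℝ) (u : Polynomial ℂ), Polynomial.X ^ M ∣ u ∧
        (∀ z ∈ closedBall (0 : ℂ) ρ, ‖u.eval z‖ ≤ η) ∧
        ∀ l ∈ U, ∃ n : ℕ, M ≤ n ∧ n ≤ N ∧ ‖l‖ ^ n ≤ W ∧ ∀ z ∈ closedBall (0 : ℂ) r,
          ‖l ^ n * (Polynomial.derivative^[n] u).eval z - G.eval z‖ ≤ e := by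
  classical
  obtain ⟨B, hB0, hB⟩ := norm_integ_le G r hr
  set δ := min (1 / 2) (e / (2 * (B + 1))) with hδd
  have hδpos : 0 < δ := by positivity
  have hδ1 : δ ≤ 1 / 2 := min_le_left _ _
  have hδ3 : δ * B ≤ e / 2 := by
    have : δ ≤ e / (2 * (B + 1)) := min_le_right _ _
    rw [le_div_iff₀ (by positivity)] at this
    nlinarith
  obtain ⟨A, hA1, hcov⟩ := deriv_covering l₀ hl₀ δ hδpos
  have hA0 : 0 < A := by linarith
  obtain ⟨K₁, hK₁⟩ := exists_factorial_tail (A * r) (e / (4 * (B + 1))) (by positivity)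
  set K := K₁ + G.natDegree + 1 with hK
  obtain ⟨U, hU, hcov⟩ := hcov K (by omega)
  refine ⟨U, hU, fun M ρ η hρ hη => ?_⟩
  obtain ⟨B', hB'0, hB'⟩ := norm_integ_le G ρ hρ
  obtain ⟨N₁, hN₁⟩ := exists_factorial_tail (A * ρ) (η / (B' + 1)) (by positivity)
  obtain ⟨J, κ, hκ1, hκ0, hκ2, hκ3⟩ := hcov (M + N₁ + 1) (by omega)
  set n₀ := M + N₁ + 1 with hn₀
  have hKpos : 0 < K := by omega
  have hinj : ∀ a b : ℕ, Function.Injective fun j : ℕ => a + K * (j + b) := by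
    intro a b j j' h
    simp only at h
    have := Nat.eq_of_mul_eq_mul_left hKpos (Nat.add_left_cancel h)
    omega
  set u : Polynomial ℂ := ∑ j ∈ Finset.range J, Polynomial.C (κ j) * integ (n₀ + K * j) G with hu
  refine ⟨n₀ + K * J, ∑ j ∈ Finset.range J, 2 / ‖κ j‖, u, ?_, ?_, ?_⟩
  · apply Finset.dvd_sum
    intro j _
    exact Dvd.dvd.mul_left (X_pow_dvd_integ _ _ (by omega) G) _
  · intro z hz
    rw [hu, Polynomial.eval_finsetSum]
    have h1 : ∀ j ∈ Finset.range J, ‖(Polynomial.C (κ j) * integ (n₀ + K * j) G).eval z‖ ≤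
        B' * ((A * ρ) ^ (n₀ + K * j) / (n₀ + K * j).factorial) := by
      intro j hj
      rw [Polynomial.eval_mul, Polynomial.eval_C, norm_mul, mul_pow]
      calc _ ≤ A ^ (n₀ + K * j) * (B' * (ρ ^ (n₀ + K * j) / (n₀ + K * j).factorial)) :=
            mul_le_mul (hκ1 j (Finset.mem_range.1 hj)) (hB' _ z hz) (norm_nonneg _) (by positivity)
        _ = _ := by ring
    refine (norm_sum_le _ _).trans ((Finset.sum_le_sum h1).trans ?_)
    rw [← Finset.mul_sum]
    have h2 := hN₁ ((Finset.range J).image fun j => n₀ + K * (j + 0)) (by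
      intro n hn
      obtain ⟨j, -, rfl⟩ := Finset.mem_image.1 hn
      omega)
    rw [Finset.sum_image (fun _ _ _ _ h => hinj _ _ h)] at h2
    simp only [add_zero] at h2
    calc _ ≤ B' * (η / (B' + 1)) := mul_le_mul_of_nonneg_left h2.le hB'0
      _ ≤ (B' + 1) * (η / (B' + 1)) := mul_le_mul_of_nonneg_right (by linarith) (by positivity)
      _ = η := by field_simp
  · intro l hl
    obtain ⟨j, hj, hjl⟩ := hκ3 l hl
    set n := n₀ + K * j with hn
    have hκj : 0 < ‖κ j‖ := norm_pos_iff.2 (hκ0 j hj)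
    have hl2 : ‖l‖ ^ n * ‖κ j‖ ≤ 2 := by
      have := norm_add_le (l ^ n * κ j - 1) 1
      rw [sub_add_cancel, norm_one, norm_mul, norm_pow] at this
      linarith
    refine ⟨n, by omega, Nat.add_le_add_left (Nat.mul_le_mul_left _ hj.le) _, ?_, ?_⟩
    · rw [← le_div_iff₀ hκj] at hl2
      exact hl2.trans (Finset.single_le_sum (f := fun j => 2 / ‖κ j‖)
        (fun j _ => by positivity) (Finset.mem_range.2 hj))
    · intro z hz
      -- splitting the sum at `j`: earlier terms are killed, the `j`-th one gives `G`
      obtain ⟨d, rfl⟩ : ∃ d, J = j + 1 + d := ⟨J - (j + 1), by omega⟩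
      have hD : (Polynomial.derivative^[n] u).eval z = κ j * G.eval z +
          ∑ i ∈ Finset.range d, κ (j + 1 + i) * (integ (0 + K * (i + 1)) G).eval z := by
        rw [hu, Polynomial.iterate_derivative_sum, Finset.sum_range_add, Finset.sum_range_succ,
          Finset.sum_eq_zero, zero_add, Polynomial.eval_add, Polynomial.iterate_derivative_C_mul,
          Polynomial.eval_C_mul, Polynomial.eval_finsetSum]
        · congr 2
          · have := iterate_derivative_integ n 0 G
            rw [add_zero, integ_zero] at this
            rw [this]
          · ext i
            rw [Polynomial.iterate_derivative_C_mul, Polynomial.eval_C_mul]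
            congr 2
            rw [show n₀ + K * (j + 1 + i) = n + (0 + K * (i + 1)) by rw [hn]; ring]
            exact iterate_derivative_integ _ _ _
        · intro i hi
          rw [Finset.mem_range] at hi
          obtain ⟨c, rfl⟩ : ∃ c, j = i + 1 + c := ⟨j - (i + 1), by omega⟩
          rw [Polynomial.iterate_derivative_C_mul,
            show n = (K + K * c) + (n₀ + K * i) by rw [hn]; ring,
            iterate_derivative_integ_eq_zero _ _ _ (by omega), mul_zero]
      have hG : ‖G.eval z‖ ≤ B := by
        have := hB 0 z hz
        simpa [integ_zero] using this
      have htail : ‖∑ i ∈ Finset.range d,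
          l ^ n * (κ (j + 1 + i) * (integ (0 + K * (i + 1)) G).eval z)‖ ≤ e / 2 := by
        have h1 : ∀ i ∈ Finset.range d,
            ‖l ^ n * (κ (j + 1 + i) * (integ (0 + K * (i + 1)) G).eval z)‖ ≤
            2 * B * ((A * r) ^ (0 + K * (i + 1)) / (0 + K * (i + 1)).factorial) := by
          intro i hi
          rw [Finset.mem_range] at hi
          have h2 := hκ2 (j + 1 + i) (by omega) j (by omega)
          rw [show j + 1 + i - j = i + 1 by omega] at h2
          have h3 := hB (0 + K * (i + 1)) z hz
          rw [norm_mul, norm_mul, norm_pow, ← mul_assoc, mul_pow]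
          have h4 : ‖l‖ ^ n * ‖κ (j + 1 + i)‖ ≤ 2 * A ^ (0 + K * (i + 1)) := by
            calc _ ≤ ‖l‖ ^ n * (A ^ (K * (i + 1)) * ‖κ j‖) :=
                  mul_le_mul_of_nonneg_left h2 (by positivity)
              _ = (‖l‖ ^ n * ‖κ j‖) * A ^ (K * (i + 1)) := by ring
              _ ≤ 2 * A ^ (K * (i + 1)) := mul_le_mul_of_nonneg_right hl2 (by positivity)
              _ = _ := by rw [zero_add]
          calc _ ≤ (2 * A ^ (0 + K * (i + 1))) *
                (B * (r ^ (0 + K * (i + 1)) / (0 + K * (i + 1)).factorial)) :=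
                mul_le_mul h4 h3 (norm_nonneg _) (by positivity)
            _ = _ := by ring
        refine (norm_sum_le _ _).trans ((Finset.sum_le_sum h1).trans ?_)
        rw [← Finset.mul_sum]
        have h2 := hK₁ ((Finset.range d).image fun i => 0 + K * (i + 1)) (by
          intro n hn
          obtain ⟨i, -, rfl⟩ := Finset.mem_image.1 hn
          have : K * 1 ≤ K * (i + 1) := Nat.mul_le_mul_left _ (by omega)
          omega)
        rw [Finset.sum_image (fun _ _ _ _ h => hinj _ _ h)] at h2
        calc _ ≤ 2 * B * (e / (4 * (B + 1))) := mul_le_mul_of_nonneg_left h2.le (by positivity)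
          _ ≤ 2 * (B + 1) * (e / (4 * (B + 1))) :=
            mul_le_mul_of_nonneg_right (by linarith) (by positivity)
          _ = e / 2 := by field_simp; norm_num
      rw [hD]
      have e1 : l ^ n * (κ j * G.eval z +
          ∑ i ∈ Finset.range d, κ (j + 1 + i) * (integ (0 + K * (i + 1)) G).eval z) - G.eval z =
          (l ^ n * κ j - 1) * G.eval z +
          ∑ i ∈ Finset.range d, l ^ n * (κ (j + 1 + i) * (integ (0 + K * (i + 1)) G).eval z) := by
        rw [← Finset.mul_sum]; ring
      rw [e1]
      refine (norm_add_le _ _).trans ?_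
      rw [norm_mul]
      have := mul_le_mul hjl hG (norm_nonneg _) hδpos.le
      linarith

/-! ### Conditions and one stage of the construction -/

/-- The data available to a condition on the polynomials `Q 0, …, Q k`: a family of discs, a bound
for the multipliers, a bound for the number of iterates, and an error. -/
abbrev Condition : Type :=
  (ℕ → Polynomial ℂ) → ℕ → Finset (ℂ × ℝ) → ℝ → ℕ → ℝ → Prop

/-- A condition which can be achieved from any polynomials by corrections vanishing to high order
at the origin and small on large discs. -/
def Patchable (S : Condition) : Prop :=
  ∀ (P : ℕ → Polynomial ℂ) (k M : ℕ) (ρ η : ℝ), 0 ≤ ρ → 0 < η → (∀ i ≤ k, (P i).natDegree < M) →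
    ∃ (Z : Finset (ℂ × ℝ)) (W : ℝ) (N : ℕ) (u : ℕ → Polynomial ℂ), Separated Z ∧
      (∀ s ∈ Z, ρ + s.2 + 1 ≤ ‖s.1‖) ∧ (∀ i, Polynomial.X ^ M ∣ u i) ∧
      (∀ i ≤ k, ∀ z ∈ closedBall (0 : ℂ) ρ, ‖(u i).eval z‖ ≤ η) ∧
      ∀ Q : ℕ → Polynomial ℂ, (∀ i ≤ k, Q i = P i + u i) → S Q k Z W N η

/-- Every `l ∈ U` has an iterate of `l D` mapping `Q i₀` close to `G` and the other `Q i` close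
to `0`. -/
def CondD (U : Set ℂ) (i₀ : ℕ) (G : Polynomial ℂ) (r e : ℝ) : Condition :=
  fun Q k _ W N η => ∀ l ∈ U, ∃ n : ℕ, n ≤ N ∧ ‖l‖ ^ n ≤ W ∧
    ∀ i ≤ k, ∀ z ∈ closedBall (0 : ℂ) r,
      ‖l ^ n * (Polynomial.derivative^[n] (Q i)).eval z - (if i = i₀ then G.eval z else 0)‖ ≤
        (if i = i₀ then e else 0) + η

/-- Every `(a, μ) ∈ U` has an iterate of `μ T_a` mapping `Q i₀` close to `G` and the other `Q i`
close to `0`. -/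
def CondT (U : Set (ℂ × ℂ)) (i₀ : ℕ) (G : Polynomial ℂ) (r e : ℝ) : Condition :=
  fun Q k Z W _ η => ∀ p ∈ U, ∃ n : ℕ, ‖p.2‖ ^ n ≤ W ∧
    (∃ s ∈ Z, closedBall (n * p.1) r ⊆ closedBall s.1 s.2) ∧
    ∀ i ≤ k, ∀ z ∈ closedBall (0 : ℂ) r,
      ‖p.2 ^ n * (Q i).eval (z + n * p.1) - (if i = i₀ then G.eval z else 0)‖ ≤
        (if i = i₀ then e else 0) + η

theorem exists_patchable_condT (i₀ : ℕ) (G : Polynomial ℂ) (r e : ℝ) (hr : 0 ≤ r) (he : 0 < e)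
    (a₀ μ₀ : ℂ) (ha₀ : a₀ ≠ 0) (hμ₀ : μ₀ ≠ 0) :
    ∃ U ∈ nhds (a₀, μ₀), Patchable (CondT U i₀ G r e) := by
  obtain ⟨U, hU, h⟩ := trans_patch G r e hr he a₀ μ₀ ha₀ hμ₀
  refine ⟨U, hU, fun P k M ρ η hρ hη _ => ?_⟩
  obtain ⟨Z, W, u, h1, h2, h3, h4, h5⟩ := h P k i₀ M ρ η hρ hη
  refine ⟨Z, W, 0, u, h1, h2, h3, h4, fun Q hQ p hp => ?_⟩
  obtain ⟨n, h6, h7, h8⟩ := h5 p hp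
  exact ⟨n, h6, h7, fun i hi => by rw [hQ i hi]; exact h8 i hi⟩

theorem exists_patchable_condD (i₀ : ℕ) (G : Polynomial ℂ) (r e : ℝ) (hr : 0 ≤ r) (he : 0 < e)
    (l₀ : ℂ) (hl₀ : l₀ ≠ 0) : ∃ U ∈ nhds l₀, Patchable (CondD U i₀ G r e) := by
  obtain ⟨U, hU, h⟩ := deriv_patch G r e hr he l₀ hl₀
  refine ⟨U, hU, fun P k M ρ η hρ hη hP => ?_⟩
  obtain ⟨N, W, u, h1, h2, h3⟩ := h M ρ η hρ hη
  refine ⟨∅, W, N, fun i => if i = i₀ then u else 0, ⟨by simp, by simp⟩, by simp, ?_, ?_, ?_⟩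
  · intro i
    by_cases hi : i = i₀ <;> simp [hi, h1]
  · intro i _ z hz
    by_cases hi : i = i₀
    · simpa [hi] using h2 z (by simpa using hz)
    · simp [hi, hη.le]
  · intro Q hQ l hl
    obtain ⟨n, hn1, hn2, hn3, hn4⟩ := h3 l hl
    refine ⟨n, hn2, hn3, fun i hi z hz => ?_⟩
    have h0 : Polynomial.derivative^[n] (P i) = 0 :=
      Polynomial.iterate_derivative_eq_zero ((hP i hi).trans_le hn1)
    rw [hQ i hi, iterate_map_add, h0, zero_add]
    by_cases hi' : i = i₀
    · simp only [hi', if_true]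
      have := hn4 z hz
      linarith
    · simp [hi', hη.le]

/-- One stage of the construction: the current polynomials, a strict bound `M` for their degrees,
the discs used so far, a radius `ρ` enclosing them, and a bound `W` for the multipliers. -/
structure Stage where
  P : ℕ → Polynomial ℂ
  M : ℕ
  Z : Finset (ℂ × ℝ)
  ρ : ℝ
  W : ℝ

/-- The invariants maintained along the construction. -/
def Stage.Valid (s : Stage) : Prop :=
  (∀ i, (s.P i).natDegree < s.M) ∧ Separated s.Z ∧ (∀ t ∈ s.Z, 1 + t.2 + 1 ≤ ‖t.1‖) ∧
    (∀ t ∈ s.Z, ‖t.1‖ + t.2 + 1 ≤ s.ρ) ∧ 1 ≤ s.W ∧ 1 ≤ s.ρ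

/-- The properties of the transition from stage `k` to the next one. The `k`-th polynomial starts
with the monomial `z ^ M`, the earlier ones have no such coefficient, and the condition `S` holds
for the new polynomials. -/
def StepProp (S : Condition) (k : ℕ) (s s' : Stage) : Prop :=
  (∀ i, k < i → s'.P i = s.P i) ∧ (∀ i, Polynomial.X ^ s.M ∣ s'.P i - s.P i) ∧
    (∀ i, (s'.P i).coeff s.M = if i = k then 1 else 0) ∧
    (∀ i ≤ k, ∀ t ∈ s.Z, ∀ z ∈ closedBall t.1 t.2,
      ‖(s'.P i - s.P i).eval z‖ ≤ (1 / 2) ^ k / s.W) ∧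
    (∀ i < k, ∀ z ∈ closedBall (0 : ℂ) k, ‖(s'.P i - s.P i).eval z‖ ≤ (1 / 2) ^ k) ∧
    s.Z ⊆ s'.Z ∧ s.W ≤ s'.W ∧ s.M < s'.M ∧
    ∃ Z ⊆ s'.Z, ∃ W ≤ s'.W, ∃ (N : ℕ) (η : ℝ), η ≤ (1 / 2) ^ k ∧
      N.factorial * W * 2 * 2 ^ k ≤ 2 ^ s'.M ∧ S s'.P k Z W N η

/-- Any valid stage can be continued so as to achieve a given patchable condition: a small
polynomial starting with `z ^ M` is added to the `k`-th one, and then corrections of higher order realise the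
condition far away from the discs used before. -/
theorem exists_step (S : Condition) (hS : Patchable S) (k : ℕ) (s : Stage) (hs : s.Valid) :
    ∃ s' : Stage, s'.Valid ∧ StepProp S k s s' := by
  classical
  obtain ⟨hdeg, hsep, hZ1, hZρ, hW, hρ⟩ := hs
  have hW0 : 0 < s.W := by linarith
  set η : ℝ := (1 / 2) ^ k / s.W / 2 with hη
  have hη0 : 0 < η := by positivity
  have hηk : η ≤ (1 / 2) ^ k := by
    have h1 : (1 / 2 : ℝ) ^ k / s.W ≤ (1 / 2) ^ k := div_le_self (by positivity) hW
    have h2 : 0 ≤ (1 / 2 : ℝ) ^ k / s.W := by positivity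
    rw [hη]; linarith
  obtain ⟨v, hv1, hv2, hv3⟩ := exists_start s.Z hsep hZ1 s.M η hη0
  set M₁ := s.M + v.natDegree + 1 with hM₁
  set P₁ : ℕ → Polynomial ℂ := fun i => s.P i + if i = k then v else 0 with hP₁
  have hdeg₁ : ∀ i, (P₁ i).natDegree < M₁ := by
    intro i
    have h1 := hdeg i
    have h2 := Polynomial.natDegree_add_le (s.P i) (if i = k then v else 0)
    have h3 : (if i = k then v else 0).natDegree ≤ v.natDegree := by split_ifs <;> simp
    simp only [hP₁]
    omega
  set ρ₁ := max s.ρ k with hρ₁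
  obtain ⟨Z, W, N, u, hZs, hZf, hu1, hu2, hSat⟩ := hS P₁ k M₁ ρ₁ η
    (by rw [hρ₁]; exact le_max_of_le_left (by linarith)) hη0 (fun i _ => hdeg₁ i)
  have hρρ : s.ρ ≤ ρ₁ := le_max_left _ _
  set P' : ℕ → Polynomial ℂ := fun i => if i ≤ k then P₁ i + u i else s.P i with hP'
  obtain ⟨M', hM'1, hM'2, hM'3⟩ : ∃ M' : ℕ, s.M < M' ∧ (∀ i, (P' i).natDegree < M') ∧
      (N.factorial * W * 2 * 2 ^ k : ℝ) ≤ 2 ^ M' := by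
    obtain ⟨m, hm⟩ := pow_unbounded_of_one_lt (N.factorial * W * 2 * 2 ^ k : ℝ)
      (one_lt_two : (1 : ℝ) < 2)
    refine ⟨m + s.M + 1 + ∑ i ∈ Finset.range (k + 1), (P' i).natDegree, by omega, ?_, ?_⟩
    · intro i
      by_cases hi : i ≤ k
      · have := Finset.single_le_sum (f := fun i => (P' i).natDegree) (fun _ _ => Nat.zero_le _)
          (show i ∈ Finset.range (k + 1) from Finset.mem_range.2 (Nat.lt_succ_of_le hi))
        omega
      · have : P' i = s.P i := if_neg hi
        rw [this]
        have := hdeg i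
        omega
    · exact hm.le.trans (pow_le_pow_right₀ one_le_two (by omega))
  have hdiff : ∀ i ≤ k, P' i - s.P i = (if i = k then v else 0) + u i := by
    intro i hi
    simp only [hP', if_pos hi, hP₁]; ring
  have hZnn : ∀ t ∈ Z, 0 ≤ ‖t.1‖ + t.2 + 1 := fun t ht => by
    have := hZs.1 t ht
    positivity
  refine ⟨⟨P', M', s.Z ∪ Z, ρ₁ + ∑ t ∈ Z, (‖t.1‖ + t.2 + 1), max s.W W⟩,
    ⟨hM'2, ⟨?_, ?_⟩, ?_, ?_, ?_, ?_⟩, ?_, ?_, ?_, ?_, ?_, ?_, ?_, hM'1, Z, ?_, W, ?_, N, η, hηk,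
      hM'3, ?_⟩
  · intro t ht
    rcases Finset.mem_union.1 ht with ht | ht
    · exact hsep.1 t ht
    · exact hZs.1 t ht
  · have key : ∀ t ∈ s.Z, ∀ t' ∈ Z, t.2 + t'.2 + 1 ≤ dist t.1 t'.1 := by
      intro t ht t' ht'
      have h1 := hZρ t ht
      have h2 := hZf t' ht'
      have h3 := norm_sub_norm_le t'.1 t.1
      rw [dist_comm, dist_eq_norm]
      linarith
    intro t ht t' ht' hne
    rcases Finset.mem_union.1 ht with ht | ht <;> rcases Finset.mem_union.1 ht' with ht' | ht'
    · exact hsep.2 t ht t' ht' hne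
    · exact key t ht t' ht'
    · have := key t' ht' t ht
      rw [dist_comm]
      linarith
    · exact hZs.2 t ht t' ht' hne
  · intro t ht
    rcases Finset.mem_union.1 ht with ht | ht
    · exact hZ1 t ht
    · have := hZf t ht
      linarith
  · intro t ht
    simp only
    rcases Finset.mem_union.1 ht with ht | ht
    · have := hZρ t ht
      have := Finset.sum_nonneg hZnn
      linarith
    · have := Finset.single_le_sum hZnn ht
      linarith
  · exact hW.trans (le_max_left _ _)
  · have := Finset.sum_nonneg hZnn
    simp only
    linarith
  · intro i hi
    exact if_neg (not_le.2 hi)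
  · intro i
    by_cases hi : i ≤ k
    · simp only
      rw [hdiff i hi]
      apply dvd_add
      · split_ifs
        · exact hv1
        · exact dvd_zero _
      · exact (pow_dvd_pow _ (by omega)).trans (hu1 i)
    · have : P' i = s.P i := if_neg hi
      simp [this]
  · intro i
    simp only
    have h0 : (s.P i).coeff s.M = 0 := Polynomial.coeff_eq_zero_of_natDegree_lt (hdeg i)
    by_cases hi : i ≤ k
    · have h1 : P' i = (P' i - s.P i) + s.P i := by ring
      rw [h1, hdiff i hi, Polynomial.coeff_add, Polynomial.coeff_add, h0, add_zero,
        (Polynomial.X_pow_dvd_iff.1 (hu1 i)) s.M (by omega), add_zero]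
      split_ifs
      · exact hv2
      · simp
    · have h1 : P' i = s.P i := if_neg hi
      rw [h1, h0, if_neg (by omega)]
  · intro i hi t ht z hz
    simp only
    rw [hdiff i hi, Polynomial.eval_add]
    have hzρ : z ∈ closedBall (0 : ℂ) ρ₁ := by
      have h1 := hZρ t ht
      rw [mem_closedBall, dist_eq_norm] at hz
      have h2 := norm_add_le (z - t.1) t.1
      rw [sub_add_cancel] at h2
      rw [mem_closedBall, dist_zero_right]
      linarith
    have h1 := hu2 i hi z hzρ
    have h2 : ‖(if i = k then v else 0).eval z‖ ≤ η := by
      split_ifs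
      · exact hv3 t ht z hz
      · simp [hη0.le]
    refine (norm_add_le _ _).trans ?_
    have : η + η = (1 / 2) ^ k / s.W := by rw [hη]; ring
    linarith
  · intro i hi z hz
    simp only
    rw [hdiff i hi.le, if_neg hi.ne, zero_add]
    exact (hu2 i hi.le z (closedBall_subset_closedBall (le_max_right _ _) hz)).trans hηk
  · exact Finset.subset_union_left
  · exact le_max_left _ _
  · exact Finset.subset_union_right
  · exact le_max_right _ _
  · exact hSat P' fun i hi => if_pos hi

/-! ### Enumeration of the conditions -/

/-- Polynomials with coefficients in a countable dense subset of `ℂ`, indexed by lists. -/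
noncomputable def polyL : List ℕ → Polynomial ℂ
  | [] => 0
  | a :: l => Polynomial.C (TopologicalSpace.denseSeq ℂ a) + Polynomial.X * polyL l

theorem exists_polyL_near (r : ℝ) (hr : 0 ≤ r) (d : ℕ) : ∀ (a : ℕ → ℂ) (ε : ℝ), 0 < ε →
    ∃ L : List ℕ, ∀ z ∈ closedBall (0 : ℂ) r,
      ‖∑ n ∈ Finset.range d, a n * z ^ n - (polyL L).eval z‖ ≤ ε := by
  induction d with
  | zero => exact fun a ε hε => ⟨[], fun z _ => by simp [polyL, hε.le]⟩
  | succ d ih =>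
    intro a ε hε
    obtain ⟨L, hL⟩ := ih (fun n => a (n + 1)) (ε / (2 * (r + 1))) (by positivity)
    obtain ⟨b, hb⟩ := (TopologicalSpace.denseRange_denseSeq ℂ).exists_dist_lt (a 0)
      (show 0 < ε / 2 by positivity)
    rw [dist_eq_norm] at hb
    refine ⟨b :: L, fun z hz => ?_⟩
    have h1 := hL z hz
    have hz' : ‖z‖ ≤ r := by simpa using hz
    have e1 : ∑ n ∈ Finset.range (d + 1), a n * z ^ n - (polyL (b :: L)).eval z =
        (a 0 - TopologicalSpace.denseSeq ℂ b) +
        z * (∑ n ∈ Finset.range d, a (n + 1) * z ^ n - (polyL L).eval z) := by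
      rw [Finset.sum_range_succ', mul_sub, Finset.mul_sum, polyL]
      simp only [Polynomial.eval_add, Polynomial.eval_C, Polynomial.eval_mul, Polynomial.eval_X,
        pow_zero, mul_one]
      have : ∀ n ∈ Finset.range d, a (n + 1) * z ^ (n + 1) = z * (a (n + 1) * z ^ n) :=
        fun n _ => by ring
      rw [Finset.sum_congr rfl this]
      ring
    rw [e1]
    refine (norm_add_le _ _).trans ?_
    rw [norm_mul]
    have h2 : ‖z‖ * ‖∑ n ∈ Finset.range d, a (n + 1) * z ^ n - (polyL L).eval z‖ ≤ ε / 2 := by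
      calc _ ≤ (r + 1) * (ε / (2 * (r + 1))) :=
            mul_le_mul (by linarith) h1 (norm_nonneg _) (by positivity)
        _ = ε / 2 := by field_simp
    linarith

/-- If every point of `s` has a neighbourhood with a patchable condition, then countably many of
these neighbourhoods cover `s`. -/
theorem countable_conditions {X : Type*} [TopologicalSpace X] [SecondCountableTopology X]
    (s : Set X) (F : Set X → Condition) (h : ∀ x ∈ s, ∃ U ∈ nhds x, Patchable (F U)) :
    ∃ Ω : Set Condition, Ω.Countable ∧ (∀ S ∈ Ω, Patchable S) ∧
      ∀ x ∈ s, ∃ U, x ∈ U ∧ F U ∈ Ω := by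
  choose! U hU hF using h
  obtain ⟨t, hts, htc, hcov⟩ := TopologicalSpace.countable_cover_nhdsWithin
    (fun x hx => mem_nhdsWithin_of_mem_nhds (hU x hx))
  refine ⟨(fun x => F (U x)) '' t, htc.image _, ?_, ?_⟩
  · rintro _ ⟨x, hx, rfl⟩
    exact hF x (hts hx)
  · intro x hx
    obtain ⟨y, hy, hxy⟩ := mem_iUnion₂.1 (hcov hx)
    exact ⟨U y, hxy, mem_image_of_mem _ hy⟩

/-- A sequence of patchable conditions in which every target, operator and accuracy is dealt with
infinitely often. -/
theorem exists_enumeration : ∃ S : ℕ → Condition, (∀ k, Patchable (S k)) ∧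
    (∀ (i₀ : ℕ) (L : List ℕ) (r m : ℕ) (l : ℂ), l ≠ 0 → ∀ K : ℕ, ∃ U, l ∈ U ∧ ∃ k ≥ K,
      S k = CondD U i₀ (polyL L) r (1 / (m + 1))) ∧
    (∀ (i₀ : ℕ) (L : List ℕ) (r m : ℕ) (a μ : ℂ), a ≠ 0 → μ ≠ 0 → ∀ K : ℕ, ∃ U, (a, μ) ∈ U ∧
      ∃ k ≥ K, S k = CondT U i₀ (polyL L) r (1 / (m + 1))) := by
  have hD : ∀ q : ℕ × List ℕ × ℕ × ℕ, ∃ Ω : Set Condition, Ω.Countable ∧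
      (∀ S ∈ Ω, Patchable S) ∧ ∀ l ∈ {l : ℂ | l ≠ 0}, ∃ U, l ∈ U ∧
        CondD U q.1 (polyL q.2.1) q.2.2.1 (1 / (q.2.2.2 + 1)) ∈ Ω := fun q =>
    countable_conditions _ (fun U => CondD U q.1 (polyL q.2.1) q.2.2.1 (1 / (q.2.2.2 + 1)))
      (fun l hl => exists_patchable_condD _ _ _ _ (Nat.cast_nonneg _) (by positivity) l hl)
  have hT : ∀ q : ℕ × List ℕ × ℕ × ℕ, ∃ Ω : Set Condition, Ω.Countable ∧
      (∀ S ∈ Ω, Patchable S) ∧ ∀ p ∈ {p : ℂ × ℂ | p.1 ≠ 0 ∧ p.2 ≠ 0}, ∃ U, p ∈ U ∧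
        CondT U q.1 (polyL q.2.1) q.2.2.1 (1 / (q.2.2.2 + 1)) ∈ Ω := fun q =>
    countable_conditions _ (fun U => CondT U q.1 (polyL q.2.1) q.2.2.1 (1 / (q.2.2.2 + 1)))
      (fun p hp => exists_patchable_condT _ _ _ _ (Nat.cast_nonneg _) (by positivity) p.1 p.2
        hp.1 hp.2)
  choose ΩD hD1 hD2 hD3 using hD
  choose ΩT hT1 hT2 hT3 using hT
  have hne : ((⋃ q, ΩD q) ∪ ⋃ q, ΩT q).Nonempty := by
    obtain ⟨U, -, h⟩ := hD3 (0, [], 0, 0) 1 one_ne_zero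
    exact ⟨_, Or.inl (mem_iUnion.2 ⟨_, h⟩)⟩
  obtain ⟨E, hE⟩ := ((countable_iUnion hD1).union (countable_iUnion hT1)).exists_eq_range hne
  refine ⟨fun k => E k.unpair.1, fun k => ?_, ?_, ?_⟩
  · have : E k.unpair.1 ∈ (⋃ q, ΩD q) ∪ ⋃ q, ΩT q := hE ▸ mem_range_self _
    rcases this with h | h <;> obtain ⟨q, hq⟩ := mem_iUnion.1 h
    · exact hD2 q _ hq
    · exact hT2 q _ hq
  · intro i₀ L r m l hl K
    obtain ⟨U, hU, h⟩ := hD3 (i₀, L, r, m) l hl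
    have : _ ∈ (⋃ q, ΩD q) ∪ ⋃ q, ΩT q := Or.inl (mem_iUnion.2 ⟨_, h⟩)
    rw [hE] at this
    obtain ⟨n, hn⟩ := this
    exact ⟨U, hU, Nat.pair n K, Nat.right_le_pair n K, by simpa using hn⟩
  · intro i₀ L r m a μ ha hμ K
    obtain ⟨U, hU, h⟩ := hT3 (i₀, L, r, m) (a, μ) ⟨ha, hμ⟩
    have : _ ∈ (⋃ q, ΩD q) ∪ ⋃ q, ΩT q := Or.inr (mem_iUnion.2 ⟨_, h⟩)
    rw [hE] at this
    obtain ⟨n, hn⟩ := this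
    exact ⟨U, hU, Nat.pair n K, Nat.right_le_pair n K, by simpa using hn⟩

/-- The construction can be run for ever, starting from zero polynomials. -/
theorem exists_tower (S : ℕ → Condition) (hS : ∀ k, Patchable (S k)) :
    ∃ σ : ℕ → Stage, (∀ k, (σ k).Valid) ∧ (σ 0).P = (fun _ => 0) ∧
      ∀ k, StepProp (S k) k (σ k) (σ (k + 1)) := by
  have h0 : (⟨fun _ => 0, 1, ∅, 1, 1⟩ : Stage).Valid := by
    refine ⟨by simp, ⟨by simp, by simp⟩, by simp, by simp, le_rfl, le_rfl⟩
  choose! next hn1 hn2 using fun k => exists_step (S k) (hS k) k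
  set σ : ℕ → Stage := fun k => Nat.rec ⟨fun _ => 0, 1, ∅, 1, 1⟩ (fun k s => next k s) k with hσ
  have hv : ∀ k, (σ k).Valid := by
    intro k
    induction k with
    | zero => exact h0
    | succ k ih => exact hn1 k _ ih
  exact ⟨σ, hv, rfl, fun k => hn2 k _ (hv k)⟩

/-! ### Entire functions and Taylor coefficients -/

theorem bddAbove_pnorm {f : ℂ → ℂ} (hf : Differentiable ℂ f) (r : ℝ) :
    BddAbove ((fun z => ‖f z‖) '' closedBall (0 : ℂ) r) :=
  (isCompact_closedBall 0 r).bddAbove_image hf.continuous.norm.continuousOn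

theorem le_pnorm {f : ℂ → ℂ} (hf : Differentiable ℂ f) {r : ℝ} {z : ℂ}
    (hz : z ∈ closedBall (0 : ℂ) r) : ‖f z‖ ≤ pnorm r f :=
  le_csSup (bddAbove_pnorm hf r) ⟨z, hz, rfl⟩

theorem pnorm_le {f : ℂ → ℂ} {r C : ℝ} (hr : 0 ≤ r)
    (h : ∀ z ∈ closedBall (0 : ℂ) r, ‖f z‖ ≤ C) : pnorm r f ≤ C := by
  refine csSup_le ⟨‖f 0‖, 0, by simpa using hr, rfl⟩ ?_
  rintro _ ⟨z, hz, rfl⟩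
  exact h z hz

/-- The `n`-th Taylor coefficient of `f` at the origin. -/
noncomputable def coef (n : ℕ) (f : ℂ → ℂ) : ℂ := iteratedDeriv n f 0 / n.factorial

theorem coef_add (n : ℕ) {f g : ℂ → ℂ} (hf : Differentiable ℂ f) (hg : Differentiable ℂ g) :
    coef n (f + g) = coef n f + coef n g := by
  rw [coef, coef, coef, iteratedDeriv_add hf.contDiff.contDiffAt hg.contDiff.contDiffAt, add_div]

theorem coef_sub (n : ℕ) {f g : ℂ → ℂ} (hf : Differentiable ℂ f) (hg : Differentiable ℂ g) :
    coef n (f - g) = coef n f - coef n g := by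
  rw [coef, coef, coef, iteratedDeriv_sub hf.contDiff.contDiffAt hg.contDiff.contDiffAt, sub_div]

theorem coef_smul (n : ℕ) {f : ℂ → ℂ} (c : ℂ) (hf : Differentiable ℂ f) :
    coef n (c • f) = c * coef n f := by
  rw [coef, coef, iteratedDeriv_const_smul hf.contDiff.contDiffAt, smul_eq_mul, mul_div_assoc]

theorem iteratedDeriv_polynomial (p : Polynomial ℂ) (n : ℕ) :
    iteratedDeriv n (fun z => p.eval z) = fun z => (Polynomial.derivative^[n] p).eval z := by
  induction n with
  | zero => simp
  | succ n ih =>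
    rw [iteratedDeriv_succ, ih, Function.iterate_succ_apply']
    ext z
    exact Polynomial.deriv _

theorem coef_polynomial (p : Polynomial ℂ) (n : ℕ) : coef n (fun z => p.eval z) = p.coeff n := by
  have h : (n.factorial : ℂ) ≠ 0 := by exact_mod_cast n.factorial_ne_zero
  rw [coef, iteratedDeriv_polynomial]
  simp only
  rw [← Polynomial.coeff_zero_eq_eval_zero, Polynomial.coeff_iterate_derivative, zero_add,
    Nat.descFactorial_self, nsmul_eq_mul]
  field_simp

theorem norm_iteratedDeriv_le {f : ℂ → ℂ} (hf : Differentiable ℂ f) (n : ℕ) (c : ℂ) {R C : ℝ}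
    (hR : 0 < R) (hC : ∀ z ∈ closedBall c R, ‖f z‖ ≤ C) :
    ‖iteratedDeriv n f c‖ ≤ n.factorial * C / R ^ n :=
  Complex.norm_iteratedDeriv_le_of_forall_mem_sphere_norm_le n hR hf.diffContOnCl
    fun z hz => hC z (sphere_subset_closedBall hz)

theorem norm_coef_le {f : ℂ → ℂ} (hf : Differentiable ℂ f) (n : ℕ) {R C : ℝ}
    (hR : 0 < R) (hC : ∀ z ∈ closedBall 0 R, ‖f z‖ ≤ C) : ‖coef n f‖ ≤ C / R ^ n := by
  have h : (0 : ℝ) < n.factorial := by exact_mod_cast n.factorial_pos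
  have h1 := norm_iteratedDeriv_le hf n 0 hR hC
  rw [coef, norm_div, Complex.norm_natCast, div_le_iff₀ h]
  calc _ ≤ _ := h1
    _ = _ := by ring

theorem hasSum_coef {f : ℂ → ℂ} (hf : Differentiable ℂ f) (z : ℂ) :
    HasSum (fun n => coef n f * z ^ n) (f z) := by
  have h : (fun n => coef n f * z ^ n) =
      fun n => ((n.factorial : ℂ))⁻¹ • (z - 0) ^ n • iteratedDeriv n f 0 := by
    ext n
    simp only [coef, sub_zero, smul_eq_mul]
    ring
  rw [h]
  exact Complex.hasSum_taylorSeries_of_entire hf 0 z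

/-- The distance from a term to the limit of a sequence whose increments decay like `2⁻ˡ`. -/
theorem norm_limit_sub_le {u : ℕ → ℂ} {a : ℂ} {B : ℝ} {k : ℕ}
    (h : ∀ l ≥ k, ‖u (l + 1) - u l‖ ≤ B * (1 / 2) ^ l) (ha : Tendsto u atTop (nhds a)) :
    ‖a - u k‖ ≤ 2 * B * (1 / 2) ^ k := by
  have h1 := dist_le_of_le_geometric_of_tendsto₀ (1 / 2) (B * (1 / 2) ^ k)
    (f := fun n => u (n + k)) (by norm_num) (fun n => by
      rw [dist_comm, dist_eq_norm]
      have := h (n + k) (by omega)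
      rw [show n + 1 + k = n + k + 1 by ring]
      calc _ ≤ _ := this
        _ = _ := by rw [pow_add]; ring) ((tendsto_add_atTop_iff_nat k).2 ha)
  rw [dist_comm, dist_eq_norm, zero_add] at h1
  calc _ ≤ _ := h1
    _ = _ := by ring

theorem norm_taylor_tail_le {f : ℂ → ℂ} (hf : Differentiable ℂ f) {R C : ℝ} (hR : 0 < R)
    (hC : ∀ z ∈ closedBall 0 (2 * R), ‖f z‖ ≤ C) (m : ℕ) {z : ℂ} (hz : z ∈ closedBall (0 : ℂ) R) :
    ‖f z - ∑ n ∈ Finset.range m, coef n f * z ^ n‖ ≤ 2 * C * (1 / 2) ^ m := by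
  refine norm_limit_sub_le (u := fun m => ∑ n ∈ Finset.range m, coef n f * z ^ n) (fun l _ => ?_)
    (hasSum_coef hf z).tendsto_sum_nat
  have h1 := norm_coef_le hf l (by positivity) hC
  have h2 : ‖z‖ ≤ R := by simpa using hz
  have h3 := (norm_nonneg _).trans h1
  rw [Finset.sum_range_succ_sub_sum, norm_mul, norm_pow]
  calc _ ≤ C / (2 * R) ^ l * R ^ l := by gcongr
    _ = _ := by rw [mul_pow, one_div, inv_pow]; field_simp

/-- Polynomials whose increments are eventually small on large discs converge to an entire
function. -/
theorem exists_limit (p : ℕ → Polynomial ℂ) (i : ℕ)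
    (h : ∀ k > i, ∀ z ∈ closedBall (0 : ℂ) k, ‖(p (k + 1) - p k).eval z‖ ≤ (1 / 2) ^ k) :
    ∃ f : ℂ → ℂ, Differentiable ℂ f ∧
      ∀ k > i, ∀ z ∈ closedBall (0 : ℂ) k, ‖f z - (p k).eval z‖ ≤ 2 * (1 / 2) ^ k := by
  have h0 : ∀ k > i, ∀ z ∈ closedBall (0 : ℂ) k, ∀ l ≥ k,
      ‖(p (l + 1)).eval z - (p l).eval z‖ ≤ 1 * (1 / 2) ^ l := by
    intro k hk z hz l hl
    rw [← Polynomial.eval_sub, one_mul]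
    exact h l (by omega) z (closedBall_subset_closedBall (by exact_mod_cast hl) hz)
  have h1 : ∀ z : ℂ, ∃ a, Tendsto (fun k => (p k).eval z) atTop (nhds a) := by
    intro z
    obtain ⟨k, hk⟩ := exists_nat_ge (max ‖z‖ (i + 1))
    have hk1 : ‖z‖ ≤ k := (le_max_left _ _).trans hk
    have hk2 : i < k := by
      have : (i : ℝ) + 1 ≤ k := (le_max_right _ _).trans hk
      exact_mod_cast this
    obtain ⟨a, ha⟩ := cauchySeq_tendsto_of_complete
      (cauchySeq_of_le_geometric (1 / 2) ((1 / 2) ^ k) (f := fun n => (p (n + k)).eval z)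
        (by norm_num) (fun n => by
          rw [dist_comm, dist_eq_norm, ← pow_add, show n + 1 + k = n + k + 1 by ring, add_comm k n]
          simpa using h0 k hk2 z (by simpa using hk1) (n + k) (by omega)))
    exact ⟨a, (tendsto_add_atTop_iff_nat (f := fun k => (p k).eval z) k).1 ha⟩
  choose f hf using h1
  have h2 : ∀ k > i, ∀ z ∈ closedBall (0 : ℂ) k, ‖f z - (p k).eval z‖ ≤ 2 * (1 / 2) ^ k := by
    intro k hk z hz
    simpa using norm_limit_sub_le (h0 k hk z hz) (hf z)
  refine ⟨f, ?_, h2⟩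
  rw [← differentiableOn_univ]
  refine TendstoLocallyUniformlyOn.differentiableOn (φ := atTop)
    (F := fun k z => (p k).eval z) ?_ (Eventually.of_forall fun k =>
      (p k).differentiable.differentiableOn) isOpen_univ
  rw [Metric.tendstoLocallyUniformlyOn_iff]
  intro ε hε x _
  refine ⟨ball x 1, mem_nhdsWithin_of_mem_nhds (ball_mem_nhds x one_pos), ?_⟩
  have h3 : Tendsto (fun k : ℕ => 2 * (1 / 2 : ℝ) ^ k) atTop (nhds 0) := by
    simpa using (tendsto_pow_atTop_nhds_zero_of_lt_one (by norm_num : (0 : ℝ) ≤ 1 / 2)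
      (by norm_num)).const_mul 2
  filter_upwards [h3.eventually_lt_const hε, eventually_gt_atTop i,
    tendsto_natCast_atTop_atTop.eventually_ge_atTop (‖x‖ + 1)] with k hk1 hk2 hk3 y hy
  rw [dist_eq_norm]
  refine (h2 k hk2 y ?_).trans_lt hk1
  have h4 : ‖y - x‖ < 1 := by rwa [← dist_eq_norm]
  have h5 := norm_sub_norm_le y x
  simp only [mem_closedBall, dist_zero_right]
  linarith

theorem iterate_derivOp (l : ℂ) (f : ℂ → ℂ) (n : ℕ) :
    (derivOp l)^[n] f = fun z => l ^ n * iteratedDeriv n f z := by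
  induction n with
  | zero => simp
  | succ n ih =>
    rw [Function.iterate_succ_apply', ih]
    ext z
    simp only [derivOp, deriv_const_mul_field, iteratedDeriv_succ]
    ring

theorem iterate_transOp (μ a : ℂ) (f : ℂ → ℂ) (n : ℕ) :
    (transOp μ a)^[n] f = fun z => μ ^ n * f (z + n * a) := by
  induction n with
  | zero => simp
  | succ n ih =>
    rw [Function.iterate_succ_apply', ih]
    ext z
    simp only [transOp]
    rw [show z + a + n * a = z + (n + 1 : ℕ) * a by push_cast; ring]
    ring

/-! ### The limit space -/

/-- An infinite run of the construction achieving the conditions `S 0, S 1, …`. -/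
structure IsTower (S : ℕ → Condition) (σ : ℕ → Stage) : Prop where
  valid : ∀ k, (σ k).Valid
  start : (σ 0).P = fun _ => 0
  step : ∀ k, StepProp (S k) k (σ k) (σ (k + 1))

/-- The coefficients of the power series to which the `i`-th polynomials converge. The `n`-th
coefficient has reached its final value at stage `n`. -/
noncomputable def limCoeff (σ : ℕ → Stage) (i n : ℕ) : ℂ := ((σ n).P i).coeff n

namespace IsTower

variable {S : ℕ → Condition} {σ : ℕ → Stage}

theorem strictMono_M (h : IsTower S σ) : StrictMono fun k => (σ k).M :=
  strictMono_nat_of_lt_succ fun k => (h.step k).2.2.2.2.2.2.2.1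

theorem lt_M (h : IsTower S σ) (k : ℕ) : k < (σ k).M := by
  induction k with
  | zero => exact (Nat.zero_le _).trans_lt ((h.valid 0).1 0)
  | succ k ih =>
    have : (σ k).M < (σ (k + 1)).M := h.strictMono_M (Nat.lt_succ_self k)
    omega

theorem P_eq_zero (h : IsTower S σ) {i k : ℕ} (hk : k ≤ i) : (σ k).P i = 0 := by
  induction k with
  | zero => rw [h.start]
  | succ k ih => rw [(h.step k).1 i hk, ih (by omega)]

theorem coeff_succ (h : IsTower S σ) (i : ℕ) {k n : ℕ} (hn : n < (σ k).M) :
    ((σ (k + 1)).P i).coeff n = ((σ k).P i).coeff n := by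
  have := Polynomial.X_pow_dvd_iff.1 ((h.step k).2.1 i) n hn
  rwa [Polynomial.coeff_sub, sub_eq_zero] at this

theorem coeff_of_le (h : IsTower S σ) (i : ℕ) {k l n : ℕ} (hn : n < (σ k).M) (hl : k ≤ l) :
    ((σ l).P i).coeff n = ((σ k).P i).coeff n := by
  induction l, hl using Nat.le_induction with
  | base => rfl
  | succ l hl ih => rw [h.coeff_succ i (hn.trans_le (h.strictMono_M.monotone hl)), ih]

theorem coeff_eq (h : IsTower S σ) (i : ℕ) {k n : ℕ} (hn : n < (σ k).M) :
    ((σ k).P i).coeff n = limCoeff σ i n := by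
  rw [limCoeff]
  rcases le_total k n with hkn | hkn
  · exact (h.coeff_of_le i hn hkn).symm
  · exact h.coeff_of_le i (h.lt_M n) hkn

theorem limCoeff_M (h : IsTower S σ) (i k : ℕ) :
    limCoeff σ i (σ k).M = if i = k then 1 else 0 := by
  rw [← h.coeff_eq i (h.strictMono_M (Nat.lt_succ_self k))]
  exact (h.step k).2.2.1 i

theorem limCoeff_eq_zero (h : IsTower S σ) {i n : ℕ} (hn : n < (σ i).M) : limCoeff σ i n = 0 := by
  rw [← h.coeff_eq i hn, h.P_eq_zero le_rfl, Polynomial.coeff_zero]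

theorem eval_P (h : IsTower S σ) (k i : ℕ) (z : ℂ) :
    ((σ k).P i).eval z = ∑ n ∈ Finset.range (σ k).M, limCoeff σ i n * z ^ n := by
  rw [Polynomial.eval_eq_sum_range' ((h.valid k).1 i)]
  refine Finset.sum_congr rfl fun n hn => ?_
  rw [h.coeff_eq i (Finset.mem_range.1 hn)]

theorem Z_mono (h : IsTower S σ) : Monotone fun k => (σ k).Z :=
  monotone_nat_of_le_succ fun k => (h.step k).2.2.2.2.2.1

theorem W_mono (h : IsTower S σ) : Monotone fun k => (σ k).W :=
  monotone_nat_of_le_succ fun k => (h.step k).2.2.2.2.2.2.1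

theorem exists_entire (h : IsTower S σ) (i : ℕ) :
    ∃ f : ℂ → ℂ, Differentiable ℂ f ∧ ∀ n, coef n f = limCoeff σ i n := by
  obtain ⟨f, hf, hf2⟩ := exists_limit (fun k => (σ k).P i) i
    fun k hk z hz => (h.step k).2.2.2.2.1 i hk z hz
  refine ⟨f, hf, fun n => ?_⟩
  have h3 : Tendsto (fun k : ℕ => 2 * (1 / 2 : ℝ) ^ k) atTop (nhds 0) := by
    simpa using (tendsto_pow_atTop_nhds_zero_of_lt_one (by norm_num : (0 : ℝ) ≤ 1 / 2)
      (by norm_num)).const_mul 2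
  have h4 : ‖coef n f - limCoeff σ i n‖ ≤ 0 := by
    refine ge_of_tendsto h3 ?_
    filter_upwards [eventually_gt_atTop i, eventually_ge_atTop 1, eventually_ge_atTop n]
      with k hk1 hk2 hk3
    have hn : n < (σ k).M := hk3.trans_lt (h.lt_M k)
    rw [← h.coeff_eq i hn, ← coef_polynomial, ← coef_sub n hf (Polynomial.differentiable _)]
    have := norm_coef_le (hf.sub (((σ k).P i).differentiable)) n one_pos
      (C := 2 * (1 / 2) ^ k) fun z hz => hf2 k hk1 z
        (closedBall_subset_closedBall (by exact_mod_cast hk2) hz)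
    simpa using this
  exact sub_eq_zero.1 (norm_le_zero_iff.1 h4)

/-- The entire functions whose Taylor series is the formal sum `∑ᵢ cᵢ fᵢ`, where `fᵢ` is the limit
of the `i`-th polynomials and `cᵢ` is the Taylor coefficient of index `(σ i).M`. Since `fᵢ`
vanishes to order at least `i + 1` at the origin, each Taylor coefficient involves finitely
many `cᵢ`. -/
noncomputable def limSpace (σ : ℕ → Stage) : Submodule ℂ (ℂ → ℂ) where
  carrier := {f | Differentiable ℂ f ∧ ∀ n, coef n f =
    ∑ i ∈ Finset.range (n + 1), coef (σ i).M f * limCoeff σ i n}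
  zero_mem' := by
    have h : ∀ n, coef n (0 : ℂ → ℂ) = 0 := fun n => by
      simpa using coef_smul n 0 (differentiable_const (0 : ℂ))
    exact ⟨differentiable_const 0, fun n => by simp [h]⟩
  add_mem' := by
    rintro f g ⟨hf, hf2⟩ ⟨hg, hg2⟩
    refine ⟨hf.add hg, fun n => ?_⟩
    simp only [coef_add _ hf hg, add_mul, Finset.sum_add_distrib]
    rw [← hf2, ← hg2]
  smul_mem' := by
    rintro c f ⟨hf, hf2⟩
    refine ⟨hf.const_smul c, fun n => ?_⟩
    simp only [coef_smul _ c hf, mul_assoc]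
    rw [← Finset.mul_sum, ← hf2]

theorem limSpace_closed (σ : ℕ → Stage) : ClosedH (limSpace σ : Set (ℂ → ℂ)) := by
  intro F f hF hf hlim
  have h1 := hlim 1 le_rfl
  have h2 : ∀ n, Tendsto (fun k => coef n (F k)) atTop (nhds (coef n f)) := by
    intro n
    rw [tendsto_iff_norm_sub_tendsto_zero]
    refine squeeze_zero (fun _ => norm_nonneg _) (fun k => ?_) h1
    rw [← coef_sub n (hF k).1 hf]
    simpa using norm_coef_le ((hF k).1.sub hf) n one_pos
      fun z hz => le_pnorm ((hF k).1.sub hf) (r := (1 : ℕ)) (by simpa using hz)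
  refine ⟨hf, fun n => tendsto_nhds_unique (h2 n) ?_⟩
  have h3 : (fun k => coef n (F k)) = fun k =>
      ∑ i ∈ Finset.range (n + 1), coef (σ i).M (F k) * limCoeff σ i n := by
    ext k
    exact (hF k).2 n
  rw [h3]
  exact tendsto_finsetSum _ fun i _ => (h2 _).mul_const _

theorem not_finiteDimensional (h : IsTower S σ) : ¬ FiniteDimensional ℂ (limSpace σ) := by
  intro hfin
  choose f hf hf2 using h.exists_entire
  have hmem : ∀ i, f i ∈ limSpace σ := by
    intro i
    refine ⟨hf i, fun n => ?_⟩
    simp only [hf2, h.limCoeff_M, ite_mul, one_mul, zero_mul]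
    rw [Finset.sum_ite_eq]
    split_ifs with hi
    · rfl
    · refine h.limCoeff_eq_zero ?_
      have := h.lt_M i
      simp only [Finset.mem_range] at hi
      omega
  let Φ : limSpace σ →ₗ[ℂ] ℕ → ℂ :=
    { toFun := fun g j => coef (σ j).M g.1
      map_add' := fun g g' => by
        ext j
        exact coef_add _ g.2.1 g'.2.1
      map_smul' := fun c g => by
        ext j
        exact coef_smul _ c g.2.1 }
  have hli : LinearIndependent ℂ fun i => (⟨f i, hmem i⟩ : limSpace σ) := by
    refine LinearIndependent.of_comp Φ ?_
    have : (Φ ∘ fun i => (⟨f i, hmem i⟩ : limSpace σ)) = fun i => Pi.single i 1 := by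
      ext i j
      simp only [Function.comp, Φ, LinearMap.coe_mk, AddHom.coe_mk, hf2, h.limCoeff_M,
        Pi.single_apply, eq_comm]
    rw [this]
    exact Pi.linearIndependent_single_one ℕ ℂ
  have := hli.finite
  exact not_finite ℕ

/-- The combinations `∑ᵢ cᵢ Pᵢ` at stage `k` are Taylor polynomials of `f`. -/
theorem sum_eval_P (h : IsTower S σ) {f : ℂ → ℂ} (hf : f ∈ limSpace σ) (k : ℕ) (z : ℂ) :
    ∑ i ∈ Finset.range k, coef (σ i).M f * ((σ k).P i).eval z =
      ∑ n ∈ Finset.range (σ k).M, coef n f * z ^ n := by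
  simp only [h.eval_P, Finset.mul_sum]
  rw [Finset.sum_comm]
  refine Finset.sum_congr rfl fun n hn => ?_
  simp only [← mul_assoc, ← Finset.sum_mul]
  congr 1
  rw [hf.2 n]
  have hn' := Finset.mem_range.1 hn
  have hz : ∀ i, n < (σ i).M → coef (σ i).M f * limCoeff σ i n = 0 := fun i hi => by
    rw [h.limCoeff_eq_zero hi, mul_zero]
  have key : ∀ m m', (∀ i, m ≤ i → n < (σ i).M) → m ≤ m' →
      ∑ i ∈ Finset.range m, coef (σ i).M f * limCoeff σ i n =
        ∑ i ∈ Finset.range m', coef (σ i).M f * limCoeff σ i n := by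
    intro m m' hm hmm
    refine Finset.sum_subset (Finset.range_mono hmm) fun i _ hi => hz i (hm i ?_)
    simpa using hi
  rw [key k (max k (n + 1)) (fun i hi => hn'.trans_le (h.strictMono_M.monotone hi))
      (le_max_left _ _),
    key (n + 1) (max k (n + 1)) (fun i hi => by have := h.lt_M i; omega) (le_max_right _ _)]

/-- A nonzero element of the limit space has a nonzero leading coefficient `cᵢ`. -/
theorem exists_coef_ne_zero {f : ℂ → ℂ} (hf : f ∈ limSpace σ) (hf0 : f ≠ 0) :
    ∃ i, coef (σ i).M f ≠ 0 := by
  by_contra! hc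
  refine hf0 (funext fun z => ?_)
  have h1 : ∀ n, coef n f = 0 := fun n => by rw [hf.2 n]; simp [hc]
  have h2 := hasSum_coef hf.1 z
  simp only [h1, zero_mul] at h2
  exact h2.unique hasSum_zero

theorem sum_norm_coef_le (h : IsTower S σ) {f : ℂ → ℂ} (hf : Differentiable ℂ f) (k : ℕ) :
    ∑ i ∈ Finset.range k, ‖coef (σ i).M f‖ ≤ pnorm 2 f := by
  have h0 : 0 ≤ pnorm 2 f := (norm_nonneg (f 0)).trans (le_pnorm hf (by simp))
  have h1 : ∀ i, ‖coef (σ i).M f‖ ≤ pnorm 2 f / 2 * (1 / 2) ^ i := by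
    intro i
    have h2 := norm_coef_le hf (σ i).M two_pos fun z hz => le_pnorm hf hz
    have h3 : (2 : ℝ) ^ (i + 1) ≤ 2 ^ (σ i).M := pow_le_pow_right₀ one_le_two (h.lt_M i)
    calc _ ≤ _ := h2
      _ ≤ pnorm 2 f / 2 ^ (i + 1) := by gcongr
      _ = _ := by rw [pow_succ, one_div, inv_pow]; field_simp
  calc _ ≤ ∑ i ∈ Finset.range k, pnorm 2 f / 2 * (1 / 2) ^ i := Finset.sum_le_sum fun i _ => h1 i
    _ = pnorm 2 f / 2 * ∑ i ∈ Finset.range k, (1 / 2 : ℝ) ^ i := by rw [Finset.mul_sum]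
    _ ≤ pnorm 2 f / 2 * 2 := by gcongr; exact sum_geometric_two_le k
    _ = _ := by ring

end IsTower

/-! ### Density of the orbits -/

/-- Summation of the errors in a condition, with weights `c i`. -/
theorem norm_sum_sub_le (c v : ℕ → ℂ) (i₀ k : ℕ) (hi₀ : i₀ ≤ k) (g : ℂ) (e η B : ℝ) (hη : 0 ≤ η)
    (hv : ∀ i ≤ k, ‖v i - (if i = i₀ then g else 0)‖ ≤ (if i = i₀ then e else 0) + η)
    (hB : ∑ i ∈ Finset.range (k + 1), ‖c i‖ ≤ B) :
    ‖∑ i ∈ Finset.range (k + 1), c i * v i - c i₀ * g‖ ≤ ‖c i₀‖ * e + B * η := by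
  have hmem : i₀ ∈ Finset.range (k + 1) := Finset.mem_range.2 (by omega)
  have h1 : c i₀ * g = ∑ i ∈ Finset.range (k + 1), c i * (if i = i₀ then g else 0) := by
    simp only [mul_ite, mul_zero, Finset.sum_ite_eq', hmem, if_true]
  have h2 : ‖c i₀‖ * e = ∑ i ∈ Finset.range (k + 1), ‖c i‖ * (if i = i₀ then e else 0) := by
    simp only [mul_ite, mul_zero, Finset.sum_ite_eq', hmem, if_true]
  rw [h1, ← Finset.sum_sub_distrib]
  calc _ ≤ ∑ i ∈ Finset.range (k + 1),
        (‖c i‖ * (if i = i₀ then e else 0) + ‖c i‖ * η) := by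
        refine (norm_sum_le _ _).trans (Finset.sum_le_sum fun i hi => ?_)
        rw [← mul_sub, norm_mul, ← mul_add]
        exact mul_le_mul_of_nonneg_left (hv i (by simpa [Nat.lt_succ_iff] using hi))
          (norm_nonneg _)
    _ = ‖c i₀‖ * e + (∑ i ∈ Finset.range (k + 1), ‖c i‖) * η := by
        rw [Finset.sum_add_distrib, ← h2, Finset.sum_mul]
    _ ≤ _ := by gcongr

/-- Multiples of the polynomials `polyL L` approximate entire functions. -/
theorem exists_polyL_approx {g : ℂ → ℂ} (hg : Differentiable ℂ g) (c : ℂ) (hc : c ≠ 0) (r : ℝ)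
    (hr : 0 < r) (ε : ℝ) (hε : 0 < ε) :
    ∃ L, ∀ z ∈ closedBall (0 : ℂ) r, ‖c * (polyL L).eval z - g z‖ ≤ ε := by
  set C := pnorm (2 * r) g
  have h3 : Tendsto (fun k : ℕ => 2 * C * (1 / 2 : ℝ) ^ k) atTop (nhds 0) := by
    simpa using (tendsto_pow_atTop_nhds_zero_of_lt_one (by norm_num : (0 : ℝ) ≤ 1 / 2)
      (by norm_num)).const_mul (2 * C)
  obtain ⟨d, hd⟩ := (h3.eventually_lt_const (half_pos hε)).exists
  have hc' : 0 < ‖c‖ := norm_pos_iff.2 hc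
  obtain ⟨L, hL⟩ := exists_polyL_near r hr.le d (fun n => coef n g / c) (ε / 2 / ‖c‖)
    (by positivity)
  refine ⟨L, fun z hz => ?_⟩
  have h1 := norm_taylor_tail_le hg hr (fun z hz => le_pnorm hg hz) d hz
  have h2 := hL z hz
  have h4 : ∑ n ∈ Finset.range d, coef n g * z ^ n =
      c * ∑ n ∈ Finset.range d, coef n g / c * z ^ n := by
    rw [Finset.mul_sum]
    refine Finset.sum_congr rfl fun n _ => ?_
    field_simp
  have h5 : ‖c * ∑ n ∈ Finset.range d, coef n g / c * z ^ n - c * (polyL L).eval z‖ ≤ ε / 2 := by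
    rw [← mul_sub, norm_mul]
    calc _ ≤ ‖c‖ * (ε / 2 / ‖c‖) := by gcongr
      _ = _ := by field_simp
  rw [← h4] at h5
  have h6 := norm_sub_le_norm_sub_add_norm_sub (g z) (∑ n ∈ Finset.range d, coef n g * z ^ n)
    (c * (polyL L).eval z)
  rw [norm_sub_rev]
  linarith

namespace IsTower

variable {S : ℕ → Condition} {σ : ℕ → Stage}

/-- At a stage treating differentiation, an iterate of `l D` maps every `f` in the limit space close
to a multiple of the target. The remainder of `f` has order `(σ (k + 1)).M` at the origin, which
was chosen large compared with the number of iterates and their multipliers. -/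
theorem approx_D (h : IsTower S σ) {f : ℂ → ℂ} (hf : f ∈ limSpace σ) {i₀ k : ℕ} (hi₀ : i₀ ≤ k)
    {U : Set ℂ} {G : Polynomial ℂ} {r e : ℝ} (hr : 0 ≤ r) (hS : S k = CondD U i₀ G r e) {l : ℂ}
    (hl : l ∈ U) : ∃ n : ℕ, ∀ z ∈ closedBall (0 : ℂ) r,
      ‖(derivOp l)^[n] f z - coef (σ i₀).M f * G.eval z‖ ≤
        ‖coef (σ i₀).M f‖ * e + (pnorm 2 f + pnorm (2 * (r + 1)) f) * (1 / 2) ^ k := by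
  obtain ⟨-, -, -, -, -, -, -, -, Z, -, W, -, N, η, hη, hN, hSat⟩ := h.step k
  rw [hS] at hSat
  obtain ⟨n, hnN, hlW, hn⟩ := hSat l hl
  refine ⟨n, fun z hz => ?_⟩
  have hB := h.sum_norm_coef_le hf.1 (k + 1)
  have hmain := norm_sum_sub_le (fun i => coef (σ i).M f)
    (fun i => l ^ n * (Polynomial.derivative^[n] ((σ (k + 1)).P i)).eval z) i₀ k hi₀ (G.eval z) e
    ((1 / 2) ^ k) _ (by positivity) (fun i hi => (hn i hi z hz).trans (by gcongr)) hB
  set Q : Polynomial ℂ := ∑ i ∈ Finset.range (k + 1),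
    Polynomial.C (coef (σ i).M f) * (σ (k + 1)).P i with hQ
  have hQe : ∀ w, Q.eval w = ∑ n ∈ Finset.range (σ (k + 1)).M, coef n f * w ^ n := by
    intro w
    rw [← h.sum_eval_P hf, hQ, Polynomial.eval_finsetSum]
    simp
  have hQD : ∑ i ∈ Finset.range (k + 1), coef (σ i).M f *
      (l ^ n * (Polynomial.derivative^[n] ((σ (k + 1)).P i)).eval z) =
      l ^ n * (Polynomial.derivative^[n] Q).eval z := by
    rw [hQ, Polynomial.iterate_derivative_sum, Polynomial.eval_finsetSum, Finset.mul_sum]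
    refine Finset.sum_congr rfl fun i _ => ?_
    rw [Polynomial.iterate_derivative_C_mul, Polynomial.eval_mul, Polynomial.eval_C]
    ring
  rw [hQD] at hmain
  set p := pnorm (2 * (r + 1)) f
  have hp : 0 ≤ p := (norm_nonneg (f 0)).trans (le_pnorm hf.1 (by simp; linarith))
  -- Cauchy's estimate on the unit disc about `z` for the Taylor remainder
  have htail : ‖iteratedDeriv n (f - fun w => Q.eval w) z‖ ≤
      n.factorial * (2 * p * (1 / 2) ^ (σ (k + 1)).M) / 1 ^ n := by
    refine norm_iteratedDeriv_le (hf.1.sub Q.differentiable) n z one_pos fun w hw => ?_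
    simp only [Pi.sub_apply]
    rw [hQe]
    refine norm_taylor_tail_le hf.1 (R := r + 1) (by linarith) (fun w hw => le_pnorm hf.1 hw) _ ?_
    have h1 : ‖w - z‖ ≤ 1 := by rwa [← dist_eq_norm]
    have h2 : ‖z‖ ≤ r := by simpa using hz
    have h3 := norm_sub_norm_le w z
    simp only [mem_closedBall, dist_zero_right]
    linarith
  rw [iteratedDeriv_sub hf.1.contDiff.contDiffAt Q.differentiable.contDiff.contDiffAt,
    iteratedDeriv_polynomial] at htail
  simp only [one_pow, div_one] at htail
  have hfac : (n.factorial : ℝ) ≤ N.factorial := by exact_mod_cast Nat.factorial_le hnN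
  have htail2 : ‖l ^ n * (iteratedDeriv n f z - (Polynomial.derivative^[n] Q).eval z)‖ ≤
      p * (1 / 2) ^ k := by
    rw [norm_mul, norm_pow]
    have hW : 0 ≤ W := (by positivity : 0 ≤ ‖l‖ ^ n).trans hlW
    calc _ ≤ W * (N.factorial * (2 * p * (1 / 2) ^ (σ (k + 1)).M)) :=
          mul_le_mul hlW (htail.trans (by gcongr)) (norm_nonneg _) hW
      _ = p * (N.factorial * W * 2 * 2 ^ k) * (1 / 2) ^ (σ (k + 1)).M * (1 / 2) ^ k := by
          rw [one_div, inv_pow, inv_pow]; field_simp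
      _ ≤ p * 2 ^ (σ (k + 1)).M * (1 / 2) ^ (σ (k + 1)).M * (1 / 2) ^ k := by gcongr
      _ = _ := by rw [one_div, inv_pow, inv_pow]; field_simp
  rw [iterate_derivOp]
  have h5 := norm_add_le (l ^ n * (iteratedDeriv n f z - (Polynomial.derivative^[n] Q).eval z))
    (l ^ n * (Polynomial.derivative^[n] Q).eval z - coef (σ i₀).M f * G.eval z)
  rw [show l ^ n * (iteratedDeriv n f z - (Polynomial.derivative^[n] Q).eval z) +
    (l ^ n * (Polynomial.derivative^[n] Q).eval z - coef (σ i₀).M f * G.eval z) =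
    l ^ n * iteratedDeriv n f z - coef (σ i₀).M f * G.eval z by ring] at h5
  linarith

/-- At a stage treating translations, an iterate of `μ T_a` maps every `f` in the limit space close
to a multiple of the target. The remainder of `f` is controlled by all later corrections being
small on the discs of this stage, relative to the multipliers used there. -/
theorem approx_T (h : IsTower S σ) {f : ℂ → ℂ} (hf : f ∈ limSpace σ) {i₀ k : ℕ} (hi₀ : i₀ ≤ k)
    {U : Set (ℂ × ℂ)} {G : Polynomial ℂ} {r e : ℝ} (hS : S k = CondT U i₀ G r e)
    {a μ : ℂ} (hU : (a, μ) ∈ U) : ∃ n : ℕ, ∀ z ∈ closedBall (0 : ℂ) r,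
      ‖(transOp μ a)^[n] f z - coef (σ i₀).M f * G.eval z‖ ≤
        ‖coef (σ i₀).M f‖ * e + (pnorm 2 f + pnorm 2 f) * (1 / 2) ^ k := by
  obtain ⟨-, -, -, -, -, -, -, -, Z, hZ, W, hW, N, η, hη, hN, hSat⟩ := h.step k
  rw [hS] at hSat
  obtain ⟨n, hlW, ⟨t, ht, hball⟩, hn⟩ := hSat (a, μ) hU
  simp only at hlW hball hn
  refine ⟨n, fun z hz => ?_⟩
  have hB := h.sum_norm_coef_le hf.1
  have hmain := norm_sum_sub_le (fun i => coef (σ i).M f)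
    (fun i => μ ^ n * ((σ (k + 1)).P i).eval (z + n * a)) i₀ k hi₀ (G.eval z) e
    ((1 / 2) ^ k) _ (by positivity) (fun i hi => (hn i hi z hz).trans (by gcongr)) (hB (k + 1))
  set w := z + n * a with hw
  have hwt : w ∈ closedBall t.1 t.2 := hball (by
    rw [mem_closedBall, dist_eq_norm, hw, add_sub_cancel_right]
    simpa using hz)
  set q : ℕ → ℂ := fun l => ∑ i ∈ Finset.range l, coef (σ i).M f * ((σ l).P i).eval w with hq
  have hqlim : Tendsto q atTop (nhds (f w)) := by
    have h1 := (hasSum_coef hf.1 w).tendsto_sum_nat.comp h.strictMono_M.tendsto_atTop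
    refine h1.congr fun l => ?_
    simp only [hq, Function.comp, h.sum_eval_P hf]
  have hp : 0 ≤ pnorm 2 f := (norm_nonneg (f 0)).trans (le_pnorm hf.1 (by simp))
  have hW0 : 0 < (σ (k + 1)).W := zero_lt_one.trans_le (h.valid (k + 1)).2.2.2.2.1
  have hinc : ∀ l ≥ k + 1, ‖q (l + 1) - q l‖ ≤ pnorm 2 f / (σ (k + 1)).W * (1 / 2) ^ l := by
    intro l hl
    have h1 : q (l + 1) - q l = ∑ i ∈ Finset.range (l + 1),
        coef (σ i).M f * ((σ (l + 1)).P i - (σ l).P i).eval w := by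
      have h2 : q l = ∑ i ∈ Finset.range (l + 1), coef (σ i).M f * ((σ l).P i).eval w := by
        rw [Finset.sum_range_succ, h.P_eq_zero le_rfl]
        simp [hq]
      rw [h2, hq]
      simp only
      rw [← Finset.sum_sub_distrib]
      simp [mul_sub]
    have hWl : (σ (k + 1)).W ≤ (σ l).W := h.W_mono hl
    have htl : t ∈ (σ l).Z := h.Z_mono hl (hZ ht)
    rw [h1]
    calc _ ≤ ∑ i ∈ Finset.range (l + 1), ‖coef (σ i).M f‖ * ((1 / 2) ^ l / (σ (k + 1)).W) := by
          refine (norm_sum_le _ _).trans (Finset.sum_le_sum fun i hi => ?_)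
          rw [norm_mul]
          have h3 := (h.step l).2.2.2.1 i (by simpa [Nat.lt_succ_iff] using hi) t htl w hwt
          gcongr
          exact h3.trans (by gcongr)
      _ = (∑ i ∈ Finset.range (l + 1), ‖coef (σ i).M f‖) * ((1 / 2) ^ l / (σ (k + 1)).W) := by
          rw [Finset.sum_mul]
      _ ≤ pnorm 2 f * ((1 / 2) ^ l / (σ (k + 1)).W) := by
          gcongr
          exact hB (l + 1)
      _ = _ := by ring
  have htail := norm_limit_sub_le hinc hqlim
  have htail2 : ‖μ ^ n * (f w - q (k + 1))‖ ≤ pnorm 2 f * (1 / 2) ^ k := by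
    rw [norm_mul, norm_pow]
    calc _ ≤ (σ (k + 1)).W * (2 * (pnorm 2 f / (σ (k + 1)).W) * (1 / 2) ^ (k + 1)) := by
          gcongr
          exact hlW.trans hW
      _ = _ := by rw [pow_succ]; field_simp
  have hsum : ∑ i ∈ Finset.range (k + 1), coef (σ i).M f *
      (μ ^ n * ((σ (k + 1)).P i).eval w) = μ ^ n * q (k + 1) := by
    rw [hq, Finset.mul_sum]
    refine Finset.sum_congr rfl fun i _ => ?_
    ring
  rw [hsum] at hmain
  rw [iterate_transOp]
  have h5 := norm_add_le (μ ^ n * (f w - q (k + 1)))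
    (μ ^ n * q (k + 1) - coef (σ i₀).M f * G.eval z)
  rw [show μ ^ n * (f w - q (k + 1)) + (μ ^ n * q (k + 1) - coef (σ i₀).M f * G.eval z) =
    μ ^ n * f w - coef (σ i₀).M f * G.eval z by ring] at h5
  linarith

end IsTower

/-- If the multiples `c * polyL L` can be approximated by iterates up to errors `‖c‖ / (m + 1)` and
`B / 2ᵏ`, with `m` and `k` arbitrarily large, then the orbit is dense. -/
theorem hypercyclicFor_of_approx {T : (ℂ → ℂ) → ℂ → ℂ} {f : ℂ → ℂ} {c : ℂ} (hc : c ≠ 0) (B : ℕ → ℝ)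
    (h : ∀ (L : List ℕ) (j m K : ℕ), ∃ k ≥ K, ∃ n : ℕ, ∀ z ∈ closedBall (0 : ℂ) j,
      ‖T^[n] f z - c * (polyL L).eval z‖ ≤ ‖c‖ * (1 / (m + 1)) + B j * (1 / 2) ^ k) :
    HypercyclicFor T f := by
  intro g hg j hj ε hε
  obtain ⟨L, hL⟩ := exists_polyL_approx hg c hc j (by exact_mod_cast hj) (ε / 4) (by positivity)
  have h1 : Tendsto (fun m : ℕ => ‖c‖ * (1 / ((m : ℝ) + 1))) atTop (nhds 0) := by
    simpa using tendsto_one_div_add_atTop_nhds_zero_nat.const_mul ‖c‖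
  obtain ⟨m, hm⟩ := (h1.eventually_lt_const (show 0 < ε / 4 by positivity)).exists
  have h2 : Tendsto (fun k : ℕ => B j * (1 / 2 : ℝ) ^ k) atTop (nhds 0) := by
    simpa using (tendsto_pow_atTop_nhds_zero_of_lt_one (by norm_num : (0 : ℝ) ≤ 1 / 2)
      (by norm_num)).const_mul (B j)
  obtain ⟨K, hK⟩ := eventually_atTop.1 (h2.eventually_lt_const (show 0 < ε / 4 by positivity))
  obtain ⟨k, hk, n, hn⟩ := h L j m K
  refine ⟨n, lt_of_le_of_lt (pnorm_le (C := 3 * (ε / 4)) (Nat.cast_nonneg j) fun z hz => ?_)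
    (by linarith)⟩
  have h3 := hn z hz
  have h4 := hL z hz
  have h5 := hK k hk
  have h6 := norm_sub_le_norm_sub_add_norm_sub (T^[n] f z) (c * (polyL L).eval z) (g z)
  simp only [Pi.sub_apply]
  linarith

/-- The family `{λD}_{λ≠0} ∪ {μT_a}_{a,μ≠0}` possesses a common hypercyclic subspace. -/
theorem stmt_0 :
    ∃ M : Submodule ℂ (ℂ → ℂ), IsClosedInfDimSubspaceH M ∧
      ∀ f ∈ M, f ≠ 0 →
        (∀ lam : ℂ, lam ≠ 0 → HypercyclicFor (derivOp lam) f) ∧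
        (∀ a μ : ℂ, a ≠ 0 → μ ≠ 0 → HypercyclicFor (transOp μ a) f) := by
  obtain ⟨S, hS, hSD, hST⟩ := exists_enumeration
  obtain ⟨σ, h1, h2, h3⟩ := exists_tower S hS
  have h : IsTower S σ := ⟨h1, h2, h3⟩
  refine ⟨IsTower.limSpace σ, ⟨fun f hf => hf.1, IsTower.limSpace_closed σ,
    h.not_finiteDimensional⟩, fun f hf hf0 => ?_⟩
  obtain ⟨i₀, hi₀⟩ := IsTower.exists_coef_ne_zero hf hf0
  refine ⟨fun lam hlam => ?_, fun a μ ha hμ => ?_⟩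
  · refine hypercyclicFor_of_approx hi₀ (fun j => pnorm 2 f + pnorm (2 * (j + 1)) f)
      fun L j m K => ?_
    obtain ⟨U, hU, k, hk, hSk⟩ := hSD i₀ L j m lam hlam (max K i₀)
    exact ⟨k, (le_max_left _ _).trans hk,
      h.approx_D hf ((le_max_right _ _).trans hk) (Nat.cast_nonneg j) hSk hU⟩
  · refine hypercyclicFor_of_approx hi₀ (fun _ => pnorm 2 f + pnorm 2 f) fun L j m K => ?_
    obtain ⟨U, hU, k, hk, hSk⟩ := hST i₀ L j m a μ ha hμ (max K i₀)
    exact ⟨k, (le_max_left _ _).trans hk, h.approx_T hf ((le_max_right _ _).trans hk) hSk hU⟩
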